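/- Let s > 1 and let u, v be harmonic functions in the exterior Ω of the unit sphere 𝕊 ⊂ ℝ³, continuous up to 𝕊, tending to 0 as |x| → ∞, and with boundary traces u|_𝕊, v|_𝕊 ∈ H^{s+1}_ax(𝕊). Then the product of radial derivatives u_r v_r restricted to 𝕊 belongs to H^s_ax(𝕊) and ‖u_r v_r‖_{H^s(𝕊)} ≤ C ‖u‖_{H^{s+1}(𝕊)} ‖v‖_{H^{s+1}(𝕊)} for some constant C > 0 independent of u and v. -/

import Mathlib

noncomputable section

open MeasureTheory Real Filter

/-- The Legendre polynomial of degree `n`, via Rodrigues' formula. -/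
def legendreP (n : ℕ) : Polynomial ℝ :=
  Polynomial.C ((2 ^ n * n.factorial : ℝ)⁻¹) *
    Polynomial.derivative^[n] ((Polynomial.X ^ 2 - 1) ^ n)

/-- The associated Legendre function `P_l^m` (with Condon–Shortley phase),
so that `P_{|m|+2k}^{|m|}(0) = (-1)^{|m|+k} (2|m|+2k-1)!!/(2k)!!`. -/
def assocLegendre (l m : ℕ) (x : ℝ) : ℝ :=
  (-1 : ℝ) ^ m * (1 - x ^ 2) ^ ((m : ℝ) / 2) *
    (Polynomial.derivative^[m] (legendreP l)).eval x

/-- The normalizing constant `α_l^m` of the spherical harmonics. -/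
def alphaY (l : ℕ) (m : ℤ) : ℝ :=
  (-1 : ℝ) ^ ((m + |m|) / 2) *
    Real.sqrt ((2 * l + 1) * (l - m.natAbs).factorial /
      (4 * Real.pi * (l + m.natAbs).factorial))

/-- The spherical harmonic `Y_l^m` in latitude/longitude coordinates `(θ, φ)`. -/
def Ylm (l : ℕ) (m : ℤ) (θ φ : ℝ) : ℂ :=
  ((alphaY l m * assocLegendre l m.natAbs (Real.sin θ) : ℝ) : ℂ) *
    Complex.exp (Complex.I * m * φ)

/-- The surface measure `dS = cos θ dθ dφ` of the unit sphere, in the coordinate box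
`[-π/2, π/2] × [-π, π)`. -/
def sphereMeasure : Measure (ℝ × ℝ) :=
  ((volume : Measure (ℝ × ℝ)).restrict
      (Set.Icc (-(Real.pi / 2)) (Real.pi / 2) ×ˢ Set.Ico (-Real.pi) Real.pi)).withDensity
    fun p => ENNReal.ofReal (Real.cos p.1)

/-- The Fourier–Laplace coefficient `ψ̂_l^m = ∫_𝕊 ψ conj(Y_l^m) dS`. -/
def flCoeff (ψ : ℝ → ℝ → ℂ) (l : ℕ) (m : ℤ) : ℂ :=
  ∫ p : ℝ × ℝ, ψ p.1 p.2 * (starRingEnd ℂ) (Ylm l m p.1 p.2) ∂sphereMeasure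

/-- Membership in the fractional Sobolev space `H^s(𝕊)`:
`ψ ∈ L²(𝕊)` and `Σ_{l,m} (l+1)^{2s} |ψ̂_l^m|² < ∞`.
(The coefficients with `|m| > l` vanish automatically.) -/
def MemHs (s : ℝ) (ψ : ℝ → ℝ → ℂ) : Prop :=
  MeasureTheory.MemLp (fun p : ℝ × ℝ => ψ p.1 p.2) 2 sphereMeasure ∧
    Summable fun p : ℕ × ℤ =>
      ((p.1 : ℝ) + 1) ^ (2 * s) * ‖flCoeff ψ p.1 p.2‖ ^ 2

/-- The `H^s(𝕊)` norm. -/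
def HsNorm (s : ℝ) (ψ : ℝ → ℝ → ℂ) : ℝ :=
  Real.sqrt (∑' p : ℕ × ℤ, ((p.1 : ℝ) + 1) ^ (2 * s) * ‖flCoeff ψ p.1 p.2‖ ^ 2)

/-- Axially symmetric functions on the sphere: functions not depending on the longitude. -/
def Axial (ψ : ℝ → ℝ → ℂ) : Prop := ∀ θ φ₁ φ₂, ψ θ φ₁ = ψ θ φ₂

/-- Spherical (latitude/longitude) coordinates on the unit sphere of `ℝ³`. -/
def sphCoord (θ φ : ℝ) : EuclideanSpace ℝ (Fin 3) :=
  (WithLp.equiv 2 (Fin 3 → ℝ)).symm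
    ![Real.cos θ * Real.cos φ, Real.cos θ * Real.sin φ, Real.sin θ]

/-- The open exterior `Ω` of the unit sphere. -/
def extDomain : Set (EuclideanSpace ℝ (Fin 3)) := {x | 1 < ‖x‖}

/-- The closed exterior `cl Ω` of the unit sphere. -/
def closedExt : Set (EuclideanSpace ℝ (Fin 3)) := {x | 1 ≤ ‖x‖}

/-- The Laplacian of a function on `ℝ³`. -/
def lap {F : Type*} [NormedAddCommGroup F] [NormedSpace ℝ F]
    (u : EuclideanSpace ℝ (Fin 3) → F) (x : EuclideanSpace ℝ (Fin 3)) : F :=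
  ∑ i : Fin 3, fderiv ℝ (fun y => fderiv ℝ u y (EuclideanSpace.single i 1)) x
    (EuclideanSpace.single i 1)

/-- The radial derivative `u_r` at a point of the unit sphere (taken from outside). -/
def radialDeriv {F : Type*} [NormedAddCommGroup F] [NormedSpace ℝ F]
    (u : EuclideanSpace ℝ (Fin 3) → F) (θ φ : ℝ) : F :=
  derivWithin (fun r : ℝ => u (r • sphCoord θ φ)) (Set.Ici 1) 1

/-- The latitudinal derivative `u_θ` at a point of the unit sphere. -/
def thetaDeriv {F : Type*} [NormedAddCommGroup F] [NormedSpace ℝ F]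
    (u : EuclideanSpace ℝ (Fin 3) → F) (θ φ : ℝ) : F :=
  deriv (fun t => u (sphCoord t φ)) θ

/-- The boundary trace on the unit sphere of a real-valued function, in coordinates. -/
def traceR (u : EuclideanSpace ℝ (Fin 3) → ℝ) (θ φ : ℝ) : ℂ := (u (sphCoord θ φ) : ℂ)

/-- The boundary trace on the unit sphere of a complex-valued function, in coordinates. -/
def traceC (u : EuclideanSpace ℝ (Fin 3) → ℂ) (θ φ : ℝ) : ℂ := u (sphCoord θ φ)

/-- The Fourier coefficient on the equator `ℰ`. -/
def equatorCoeff (h : ℝ → ℂ) (m : ℤ) : ℂ :=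
  (1 / (2 * Real.pi)) * ∫ φ in (-Real.pi)..Real.pi, h φ * Complex.exp (-(Complex.I * m * φ))

/-- Membership in the fractional Sobolev space `H^s(ℰ)` on the equator. -/
def MemHsE (s : ℝ) (h : ℝ → ℂ) : Prop :=
  MeasureTheory.MemLp h 2 (volume.restrict (Set.Ico (-Real.pi) Real.pi)) ∧
    Summable fun m : ℤ => ((m.natAbs : ℝ) + 1) ^ (2 * s) * ‖equatorCoeff h m‖ ^ 2

/-- The `H^s(ℰ)` norm. -/
def HsNormE (s : ℝ) (h : ℝ → ℂ) : ℝ :=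
  Real.sqrt (∑' m : ℤ, ((m.natAbs : ℝ) + 1) ^ (2 * s) * ‖equatorCoeff h m‖ ^ 2)

/-- The constant `β_l^m`. -/
def betaLM (l : ℕ) (m : ℤ) : ℝ :=
  Real.sqrt (((l : ℝ) - m.natAbs) * ((l : ℝ) + m.natAbs) /
    ((2 * (l : ℝ) - 1) * (2 * (l : ℝ) + 1)))

/-- The constant `γ_l^m = -(l+1)β_l^m / (3(l+2)β_{l+1}^m)`. -/
def gammaLM (l : ℕ) (m : ℤ) : ℝ :=
  -(((l : ℝ) + 1) * betaLM l m) / (3 * ((l : ℝ) + 2) * betaLM (l + 1) m)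

/-- The product `Γ_k^m = ∏_{j=1}^k γ_{|m|+2j-1}^m` (with `Γ_0^m = 1`). -/
def GammaKM (m : ℤ) (k : ℕ) : ℝ :=
  ∏ j ∈ Finset.Icc 1 k, gammaLM (m.natAbs + 2 * j - 1) m

/-- The value `α_{|m|+2k}^m P_{|m|+2k}^{|m|}(0)`. -/
def PzeroM (m : ℤ) (k : ℕ) : ℝ :=
  alphaY (m.natAbs + 2 * k) m * assocLegendre (m.natAbs + 2 * k) m.natAbs 0

/-- The coefficient `a_l^m = f̂_l^m / (6(l+2)β_{l+1}^m)`. -/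
def aCoef (f : ℝ → ℝ → ℂ) (l : ℕ) (m : ℤ) : ℂ :=
  flCoeff f l m / ((6 * ((l : ℝ) + 2) * betaLM (l + 1) m : ℝ) : ℂ)

/-- The solution of the recurrence `b_{|m|-1}^m = b_{|m|}^m = 0`,
`b_{l+1}^m = γ_l^m b_{l-1}^m + a_l^m`; here `bSeq f m n = b_{|m|-1+n}^m`. -/
def bSeq (f : ℝ → ℝ → ℂ) (m : ℤ) : ℕ → ℂ
  | 0 => 0
  | 1 => 0
  | n + 2 => ((gammaLM (m.natAbs + n) m : ℝ) : ℂ) * bSeq f m n + aCoef f (m.natAbs + n) m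

/-- The coefficient `b_l^m`. -/
def bCoef (f : ℝ → ℝ → ℂ) (l : ℕ) (m : ℤ) : ℂ := bSeq f m (l + 1 - m.natAbs)

/-- The constant `ã^m`. -/
def aTilde (f : ℝ → ℝ → ℂ) (h : ℝ → ℂ) (m : ℤ) : ℂ :=
  (equatorCoeff h m - ∑' k : ℕ, bCoef f (m.natAbs + 2 * k) m * ((PzeroM m k : ℝ) : ℂ)) /
    (((∑' k : ℕ, GammaKM m k * PzeroM m k : ℝ)) : ℂ)

/-- The coefficient `c_l^m`: `c_{|m|+2k}^m = Γ_k^m ã^m` and `c_{|m|+2k-1}^m = 0`. -/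
def cCoef (f : ℝ → ℝ → ℂ) (h : ℝ → ℂ) (l : ℕ) (m : ℤ) : ℂ :=
  if m.natAbs ≤ l ∧ (l - m.natAbs) % 2 = 0 then
    ((GammaKM m ((l - m.natAbs) / 2) : ℝ) : ℂ) * aTilde f h m
  else 0

/-- The boundary trace `v(1, θ, φ)` of the formal series solution. -/
def vTraceS (f : ℝ → ℝ → ℂ) (h : ℝ → ℂ) (θ φ : ℝ) : ℂ :=
  ∑' p : ℕ × ℤ, (bCoef f p.1 p.2 + cCoef f h p.1 p.2) * Ylm p.1 p.2 θ φ

/-- The latitude of a point of `ℝ³`. -/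
def latitude (x : EuclideanSpace ℝ (Fin 3)) : ℝ := Real.arcsin (x 2 / ‖x‖)

/-- The longitude of a point of `ℝ³`. -/
def longitude (x : EuclideanSpace ℝ (Fin 3)) : ℝ :=
  Complex.arg ((x 0 : ℂ) + (x 1 : ℂ) * Complex.I)

/-- The formal series solution `v = Σ (b_l^m + c_l^m) r^{-l-1} Y_l^m(θ, φ)`. -/
def vFun (f : ℝ → ℝ → ℂ) (h : ℝ → ℂ) (x : EuclideanSpace ℝ (Fin 3)) : ℂ :=
  ∑' p : ℕ × ℤ, (bCoef f p.1 p.2 + cCoef f h p.1 p.2) * ((‖x‖ : ℂ) ^ (-(p.1 : ℤ) - 1)) *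
    Ylm p.1 p.2 (latitude x) (longitude x)

/-- `v` is a classical solution of the linearized (oblique derivative) problem
`Δv = 0` in `Ω`, `∇d⋅∇v = -2 sin θ v_r + cos θ v_θ = f/2` on `𝕊`, `v → 0` at infinity,
`v = h` on the equator; complex-valued version. -/
def SolvesObliqueC (v : EuclideanSpace ℝ (Fin 3) → ℂ) (f : ℝ → ℝ → ℂ) (h : ℝ → ℂ) : Prop :=
  ContDiffOn ℝ 2 v extDomain ∧ ContDiffOn ℝ 1 v closedExt ∧
    (∀ x ∈ extDomain, lap v x = 0) ∧
    (∀ θ ∈ Set.Icc (-(Real.pi / 2)) (Real.pi / 2), ∀ φ : ℝ,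
      -2 * (Real.sin θ : ℂ) * radialDeriv v θ φ + (Real.cos θ : ℂ) * thetaDeriv v θ φ
        = f θ φ / 2) ∧
    Filter.Tendsto v (Bornology.cobounded _) (nhds 0) ∧
    (∀ φ : ℝ, v (sphCoord 0 φ) = h φ)

/-- Real-valued version of `SolvesObliqueC`. -/
def SolvesObliqueR (v : EuclideanSpace ℝ (Fin 3) → ℝ) (f : ℝ → ℝ → ℝ) (h : ℝ → ℝ) : Prop :=
  ContDiffOn ℝ 2 v extDomain ∧ ContDiffOn ℝ 1 v closedExt ∧
    (∀ x ∈ extDomain, lap v x = 0) ∧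
    (∀ θ ∈ Set.Icc (-(Real.pi / 2)) (Real.pi / 2), ∀ φ : ℝ,
      -2 * Real.sin θ * radialDeriv v θ φ + Real.cos θ * thetaDeriv v θ φ = f θ φ / 2) ∧
    Filter.Tendsto v (Bornology.cobounded _) (nhds 0) ∧
    (∀ φ : ℝ, v (sphCoord 0 φ) = h φ)

/- Outside the ball `u = ∑ c_l r^(-l-1) Y_l`, so the trace of `-u_r` has the coefficients
`(l + 1) c_l` and its `H^s` norm is the `H^(s+1)` norm of the trace of `u`. What remains is that the
axial part of `H^s` is an algebra for `s > 1`. A product of Legendre polynomials of degrees below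
`n / 2` has no coefficient in degrees `≥ n`; hence the `L²` tail of `f g` from `n` is bounded by the
tails of `f` and `g` from `n / 2` times sup norms of `g` and `f`. Summation by parts in `n` turns
these tail bounds into the weighted bound, and Cauchy–Schwarz bounds the sup norms, because the
normalized `P_l` satisfy `sup |P_l|² = l + 1/2`. -/

section WeightedSums

variable {a b : ℕ → ℝ} {p : ℝ}

lemma sum_cumulative_mul_le_tsum {d : ℕ → ℝ} (hd : ∀ n, 0 ≤ d n) (hb : ∀ k, 0 ≤ b k)
    (hdb : Summable fun k ↦ (∑ n ∈ Finset.range (2 * k + 1), d n) * b k)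
    (hab : ∀ n N, ∑ l ∈ Finset.Ico n N, a l ≤ ∑' k, if n ≤ 2 * k then b k else 0)
    (hsb : Summable b) (N : ℕ) :
    ∑ l ∈ Finset.range N, (∑ n ∈ Finset.range (l + 1), d n) * a l ≤
      ∑' k, (∑ n ∈ Finset.range (2 * k + 1), d n) * b k := by
  have hs (n : ℕ) : Summable fun k ↦ if n ≤ 2 * k then b k else 0 :=
    hsb.of_nonneg_of_le (fun k ↦ by split_ifs <;> simp [hb k]) fun k ↦ by
      split_ifs <;> simp [hb k]
  calc ∑ l ∈ Finset.range N, (∑ n ∈ Finset.range (l + 1), d n) * a l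
      = ∑ n ∈ Finset.range N, d n * ∑ l ∈ Finset.Ico n N, a l := by
        simp only [Finset.range_eq_Ico, Finset.sum_mul, Finset.mul_sum]
        exact (Finset.sum_Ico_Ico_comm 0 N fun n l ↦ d n * a l).symm
    _ ≤ ∑ n ∈ Finset.range N, d n * ∑' k, if n ≤ 2 * k then b k else 0 := by
        gcongr with n
        exacts [hd n, hab n N]
    _ = ∑' k, ∑ n ∈ Finset.range N, d n * if n ≤ 2 * k then b k else 0 := by
        rw [Summable.tsum_finsetSum fun n _ ↦ (hs n).mul_left (d n)]
        exact Finset.sum_congr rfl fun n _ ↦ tsum_mul_left.symm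
    _ ≤ ∑' k, (∑ n ∈ Finset.range (2 * k + 1), d n) * b k := by
        refine Summable.tsum_le_tsum (fun k ↦ ?_)
          (summable_sum fun n _ ↦ (hs n).mul_left (d n)) hdb
        simp only [mul_ite, mul_zero, ← Finset.sum_filter, ← Finset.sum_mul]
        refine mul_le_mul_of_nonneg_right
          (Finset.sum_le_sum_of_subset_of_nonneg (fun n hn ↦ ?_) fun n _ _ ↦ hd n) (hb k)
        have := (Finset.mem_filter.1 hn).2
        exact Finset.mem_range.2 (by lia)

lemma summable_of_summable_rpow_mul (hp : 0 ≤ p) (hb : ∀ k, 0 ≤ b k)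
    (hpb : Summable fun k : ℕ ↦ (k + 1 : ℝ) ^ p * b k) : Summable b :=
  hpb.of_nonneg_of_le hb fun k ↦
    le_mul_of_one_le_left (hb k) (one_le_rpow (by linarith [k.cast_nonneg (α := ℝ)]) hp)

/- Summation by parts against the increments `(n + 1) ^ p - n ^ p` of the weight. -/
lemma sum_rpow_mul_le_of_tail_le (hp : 0 < p) (hb : ∀ k, 0 ≤ b k)
    (hpb : Summable fun k : ℕ ↦ (k + 1 : ℝ) ^ p * b k)
    (hab : ∀ n N, ∑ l ∈ Finset.Ico n N, a l ≤ ∑' k, if n ≤ 2 * k then b k else 0) (N : ℕ) :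
    ∑ l ∈ Finset.range N, (l + 1 : ℝ) ^ p * a l ≤ 2 ^ p * ∑' k : ℕ, (k + 1 : ℝ) ^ p * b k := by
  let d (n : ℕ) : ℝ := (n + 1) ^ p - n ^ p
  have hd (n : ℕ) : 0 ≤ d n := sub_nonneg.2 (by gcongr; linarith)
  have sum_d (m : ℕ) : ∑ n ∈ Finset.range m, d n = (m : ℝ) ^ p := by
    simpa [d, zero_rpow hp.ne'] using Finset.sum_range_sub (fun n : ℕ ↦ (n : ℝ) ^ p) m
  have weight_le (k : ℕ) : ((2 * k + 1 : ℕ) : ℝ) ^ p * b k ≤ 2 ^ p * ((k + 1) ^ p * b k) := by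
    rw [← mul_assoc, ← mul_rpow zero_le_two (by positivity)]
    have := hb k
    gcongr
    push_cast
    linarith
  have hdb : Summable fun k ↦ (∑ n ∈ Finset.range (2 * k + 1), d n) * b k := by
    simp only [sum_d]
    exact (hpb.mul_left (2 ^ p)).of_nonneg_of_le
      (fun k ↦ mul_nonneg (by positivity) (hb k)) weight_le
  calc ∑ l ∈ Finset.range N, (l + 1 : ℝ) ^ p * a l
      = ∑ l ∈ Finset.range N, (∑ n ∈ Finset.range (l + 1), d n) * a l := by simp [sum_d]
    _ ≤ ∑' k, (∑ n ∈ Finset.range (2 * k + 1), d n) * b k :=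
        sum_cumulative_mul_le_tsum hd hb hdb hab
          (summable_of_summable_rpow_mul hp.le hb hpb) N
    _ ≤ ∑' k : ℕ, 2 ^ p * ((k + 1 : ℝ) ^ p * b k) := by
        refine hdb.tsum_le_tsum (fun k ↦ ?_) (hpb.mul_left _)
        rw [sum_d]
        exact weight_le k
    _ = 2 ^ p * ∑' k : ℕ, (k + 1 : ℝ) ^ p * b k := tsum_mul_left

end WeightedSums

section GradedBasis

variable {X : Type*} [TopologicalSpace X] [CompactSpace X] [MeasurableSpace X] [BorelSpace X]
  {μ : Measure X} [IsFiniteMeasure μ]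

lemma integrable_continuousMap (f : C(X, ℝ)) : Integrable f μ :=
  f.continuous.integrable_of_hasCompactSupport (.of_compactSpace _)

/-- A Hilbert basis of `L²(μ)` made of continuous functions and compatible with products: the
product of the basis functions of degrees `i` and `j` is orthogonal to those of degree above
`i + j`. The Legendre polynomials are the example of interest. -/
structure GradedHilbertBasis (μ : Measure X) [IsFiniteMeasure μ] where
  toHilbertBasis : HilbertBasis ℕ ℝ (Lp ℝ 2 μ)
  fn : ℕ → C(X, ℝ)
  toHilbertBasis_apply (l : ℕ) : toHilbertBasis l = ContinuousMap.toLp 2 μ ℝ (fn l)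
  integral_mul_mul_eq_zero {i j l : ℕ} (h : i + j < l) : ∫ x, fn i x * fn j x * fn l x ∂μ = 0

namespace GradedHilbertBasis

variable (e : GradedHilbertBasis μ) {s : ℝ}

/-- The Fourier coefficients of a continuous function with respect to a graded Hilbert basis. -/
def coeff (f : C(X, ℝ)) (l : ℕ) : ℝ := ∫ x, f x * e.fn l x ∂μ

/-- Membership in the abstract Sobolev space of order `s`, which weights the coefficient of
degree `l` by `(l + 1) ^ s`. -/
def MemSobolev (s : ℝ) (f : C(X, ℝ)) : Prop :=
  Summable fun l : ℕ ↦ (l + 1 : ℝ) ^ (2 * s) * e.coeff f l ^ 2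

/-- The square of the abstract Sobolev norm of order `s`. -/
def sobolevSq (s : ℝ) (f : C(X, ℝ)) : ℝ := ∑' l : ℕ, (l + 1 : ℝ) ^ (2 * s) * e.coeff f l ^ 2

/-- The condition under which the Sobolev space of order `s` embeds in `C(X)`. -/
def Embeds (s : ℝ) : Prop := Summable fun l : ℕ ↦ ‖e.fn l‖ ^ 2 / (l + 1 : ℝ) ^ (2 * s)

/-- The square of the norm of the embedding of the Sobolev space of order `s` in `C(X)`. -/
def embeddingConst (s : ℝ) : ℝ := ∑' l : ℕ, ‖e.fn l‖ ^ 2 / (l + 1 : ℝ) ^ (2 * s)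

/-- The part of the expansion of `f` of degree below `n / 2`, so that a product of two such parts
has degree below `n`. -/
def lowPart (n : ℕ) (f : C(X, ℝ)) : C(X, ℝ) :=
  ∑ l ∈ Finset.range n with 2 * l < n, e.coeff f l • e.fn l

lemma coeff_eq_inner (f : C(X, ℝ)) (l : ℕ) :
    e.coeff f l = inner ℝ (e.toHilbertBasis l) (ContinuousMap.toLp 2 μ ℝ f) := by
  rw [e.toHilbertBasis_apply, ContinuousMap.inner_toLp]
  rfl

lemma coeff_add (f g : C(X, ℝ)) : e.coeff (f + g) = e.coeff f + e.coeff g := by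
  funext l
  simp only [coeff_eq_inner, map_add, inner_add_right, Pi.add_apply]

lemma coeff_sub (f g : C(X, ℝ)) : e.coeff (f - g) = e.coeff f - e.coeff g := by
  funext l
  simp only [coeff_eq_inner, map_sub, inner_sub_right, Pi.sub_apply]

lemma coeff_fn (i j : ℕ) : e.coeff (e.fn i) j = if i = j then 1 else 0 := by
  rw [coeff_eq_inner, ← e.toHilbertBasis_apply,
    orthonormal_iff_ite.1 e.toHilbertBasis.orthonormal]
  simp only [eq_comm]

lemma sobolevSq_nonneg (s : ℝ) (f : C(X, ℝ)) : 0 ≤ e.sobolevSq s f :=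
  tsum_nonneg fun _ ↦ by positivity

lemma embeddingConst_pos (hs : e.Embeds s) : 0 < e.embeddingConst s := by
  have fn_ne_zero : e.fn 0 ≠ 0 := fun h ↦ by
    simpa [coeff, h] using e.coeff_fn 0 0
  have := norm_pos_iff.2 fn_ne_zero
  exact Summable.tsum_pos hs (fun _ ↦ by positivity) 0 (by positivity)

lemma coeff_sum_smul (F : Finset ℕ) (c : ℕ → ℝ) (l : ℕ) :
    e.coeff (∑ i ∈ F, c i • e.fn i) l = if l ∈ F then c l else 0 := by
  have h := coeff_fn e
  simp only [coeff_eq_inner, map_sum, map_smul, inner_sum, inner_smul_right] at h ⊢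
  simp [h]

lemma hasSum_sq_coeff (f : C(X, ℝ)) : HasSum (fun l ↦ e.coeff f l ^ 2) (∫ x, f x ^ 2 ∂μ) := by
  have h := e.toHilbertBasis.hasSum_inner_mul_inner (ContinuousMap.toLp 2 μ ℝ f)
    (ContinuousMap.toLp 2 μ ℝ f)
  rw [ContinuousMap.inner_toLp] at h
  simpa [coeff_eq_inner, real_inner_comm, sq] using h

lemma hasSum_coeff_smul_toLp (f : C(X, ℝ)) :
    HasSum (fun l ↦ ContinuousMap.toLp 2 μ ℝ (e.coeff f l • e.fn l))
      (ContinuousMap.toLp 2 μ ℝ f) := by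
  simpa only [map_smul, ← e.toHilbertBasis_apply, e.coeff_eq_inner,
    HilbertBasis.repr_apply_apply] using
    e.toHilbertBasis.hasSum_repr (ContinuousMap.toLp 2 μ ℝ f)

lemma sum_norm_smul_sq_le (hs : e.Embeds s) {c : ℕ → ℝ}
    (hc : Summable fun l : ℕ ↦ (l + 1 : ℝ) ^ (2 * s) * c l ^ 2) (F : Finset ℕ) :
    (∑ l ∈ F, ‖c l • e.fn l‖) ^ 2 ≤
      e.embeddingConst s * ∑' l : ℕ, (l + 1 : ℝ) ^ (2 * s) * c l ^ 2 := by
  have weight_pos (l : ℕ) : (0 : ℝ) < (l + 1 : ℝ) ^ s := by positivity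
  have weight_sq (l : ℕ) : (l + 1 : ℝ) ^ (2 * s) = ((l + 1 : ℝ) ^ s) ^ 2 := by
    rw [← rpow_natCast, ← rpow_mul (by positivity), mul_comm, Nat.cast_two]
  calc (∑ l ∈ F, ‖c l • e.fn l‖) ^ 2
      = (∑ l ∈ F, (‖e.fn l‖ / (l + 1 : ℝ) ^ s) * ((l + 1 : ℝ) ^ s * |c l|)) ^ 2 := by
        congr 1
        refine Finset.sum_congr rfl fun l _ ↦ ?_
        rw [norm_smul, norm_eq_abs, ← mul_assoc, div_mul_cancel₀ _ (weight_pos l).ne', mul_comm]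
    _ ≤ (∑ l ∈ F, (‖e.fn l‖ / (l + 1 : ℝ) ^ s) ^ 2) *
          ∑ l ∈ F, ((l + 1 : ℝ) ^ s * |c l|) ^ 2 := Finset.sum_mul_sq_le_sq_mul_sq ..
    _ = (∑ l ∈ F, ‖e.fn l‖ ^ 2 / (l + 1 : ℝ) ^ (2 * s)) *
          ∑ l ∈ F, (l + 1 : ℝ) ^ (2 * s) * c l ^ 2 := by
        simp only [div_pow, mul_pow, sq_abs, weight_sq]
    _ ≤ e.embeddingConst s * ∑' l : ℕ, (l + 1 : ℝ) ^ (2 * s) * c l ^ 2 := by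
        gcongr
        · exact tsum_nonneg fun l ↦ by positivity
        · exact hs.sum_le_tsum F fun l _ ↦ by positivity
        · exact hc.sum_le_tsum F fun l _ ↦ by positivity

lemma summable_norm_smul (hs : e.Embeds s) {c : ℕ → ℝ}
    (hc : Summable fun l : ℕ ↦ (l + 1 : ℝ) ^ (2 * s) * c l ^ 2) :
    Summable fun l ↦ ‖c l • e.fn l‖ :=
  summable_of_sum_le (fun _ ↦ norm_nonneg _) fun F ↦
    le_sqrt_of_sq_le (e.sum_norm_smul_sq_le hs hc F)

lemma coeff_tsum_smul {c : ℕ → ℝ} (hc : Summable fun l ↦ ‖c l • e.fn l‖) :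
    e.coeff (∑' l, c l • e.fn l) = c := by
  funext l
  let L : C(X, ℝ) →L[ℝ] ℝ := (innerSL ℝ (e.toHilbertBasis l)).comp (ContinuousMap.toLp 2 μ ℝ)
  have hL (f : C(X, ℝ)) : L f = e.coeff f l := (e.coeff_eq_inner f l).symm
  have coeff_term (k : ℕ) : L (c k • e.fn k) = if k = l then c k else 0 := by
    rw [L.map_smul, hL, e.coeff_fn, smul_eq_mul, mul_ite, mul_one, mul_zero]
  rw [← hL, L.map_tsum hc.of_norm, tsum_congr coeff_term, tsum_ite_eq]

lemma hasSum_coeff_smul [μ.IsOpenPosMeasure] {f : C(X, ℝ)} (hs : e.Embeds s)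
    (hf : e.MemSobolev s f) : HasSum (fun l ↦ e.coeff f l • e.fn l) f :=
  ContinuousMap.hasSum_of_hasSum_Lp (e.summable_norm_smul hs hf).of_norm
    (e.hasSum_coeff_smul_toLp f)

lemma norm_sq_le [μ.IsOpenPosMeasure] {f : C(X, ℝ)} (hs : e.Embeds s) (hf : e.MemSobolev s f) :
    ‖f‖ ^ 2 ≤ e.embeddingConst s * e.sobolevSq s f :=
  le_of_tendsto ((e.hasSum_coeff_smul hs hf).norm.pow 2) <| .of_forall fun F ↦
    (pow_le_pow_left₀ (norm_nonneg _) (norm_sum_le F _) 2).trans (e.sum_norm_smul_sq_le hs hf F)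

lemma norm_lowPart_sq_le {f : C(X, ℝ)} (hs : e.Embeds s) (hf : e.MemSobolev s f) (n : ℕ) :
    ‖e.lowPart n f‖ ^ 2 ≤ e.embeddingConst s * e.sobolevSq s f :=
  (pow_le_pow_left₀ (norm_nonneg _) (norm_sum_le _ _) 2).trans (e.sum_norm_smul_sq_le hs hf _)

lemma coeff_lowPart (f : C(X, ℝ)) (n l : ℕ) :
    e.coeff (e.lowPart n f) l = if 2 * l < n then e.coeff f l else 0 := by
  rw [lowPart, coeff_sum_smul]
  congr 1
  simp only [Finset.mem_filter, Finset.mem_range, eq_iff_iff]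
  lia

lemma coeff_lowPart_mul_lowPart (f g : C(X, ℝ)) {n l : ℕ} (hl : n ≤ l) :
    e.coeff (e.lowPart n f * e.lowPart n g) l = 0 := by
  have h (i j : ℕ) (hij : i + j < l) : inner ℝ (e.toHilbertBasis l)
      (ContinuousMap.toLp 2 μ ℝ (e.fn i * e.fn j)) = 0 := by
    rw [← coeff_eq_inner]
    exact e.integral_mul_mul_eq_zero hij
  simp only [coeff_eq_inner, lowPart, Finset.sum_mul_sum, map_sum, inner_sum, smul_mul_smul_comm,
    map_smul, inner_smul_right]
  refine Finset.sum_eq_zero fun i hi ↦ Finset.sum_eq_zero fun j hj ↦ ?_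
  have hi := (Finset.mem_filter.1 hi).2
  have hj := (Finset.mem_filter.1 hj).2
  rw [h i j (by lia), mul_zero]

lemma integral_sub_lowPart_sq (f : C(X, ℝ)) (n : ℕ) :
    ∫ x, (f - e.lowPart n f) x ^ 2 ∂μ = ∑' k, if n ≤ 2 * k then e.coeff f k ^ 2 else 0 := by
  rw [← (e.hasSum_sq_coeff _).tsum_eq]
  congr! 2 with k
  rw [coeff_sub, Pi.sub_apply, coeff_lowPart]
  split_ifs <;> first | lia | simp

lemma integral_mul_add_mul_sq_le (f g a b : C(X, ℝ)) :
    ∫ x, (f * a + b * g) x ^ 2 ∂μ ≤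
      2 * ‖f‖ ^ 2 * ∫ x, a x ^ 2 ∂μ + 2 * ‖g‖ ^ 2 * ∫ x, b x ^ 2 ∂μ := by
  have ha := (integrable_continuousMap (μ := μ) (a ^ 2)).const_mul (2 * ‖f‖ ^ 2)
  have hb := (integrable_continuousMap (μ := μ) (b ^ 2)).const_mul (2 * ‖g‖ ^ 2)
  rw [← integral_const_mul, ← integral_const_mul, ← integral_add (by exact ha) (by exact hb)]
  refine integral_mono (integrable_continuousMap ((f * a + b * g) ^ 2)) (ha.add hb) fun x ↦ ?_
  have hf : f x ^ 2 ≤ ‖f‖ ^ 2 := sq_le_sq' (neg_le_of_abs_le (f.norm_coe_le_norm x))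
    (le_of_abs_le (f.norm_coe_le_norm x))
  have hg : g x ^ 2 ≤ ‖g‖ ^ 2 := sq_le_sq' (neg_le_of_abs_le (g.norm_coe_le_norm x))
    (le_of_abs_le (g.norm_coe_le_norm x))
  calc (f x * a x + b x * g x) ^ 2
      ≤ 2 * (f x ^ 2 * a x ^ 2 + g x ^ 2 * b x ^ 2) := by
        nlinarith [sq_nonneg (f x * a x - b x * g x)]
    _ ≤ 2 * (‖f‖ ^ 2 * a x ^ 2 + ‖g‖ ^ 2 * b x ^ 2) := by gcongr
    _ = 2 * ‖f‖ ^ 2 * a x ^ 2 + 2 * ‖g‖ ^ 2 * b x ^ 2 := by ring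

/- In degrees `≥ n`, `f g` has the coefficients of `f (g - g_low) + (f - f_low) g_low`. -/
lemma sum_Ico_coeff_mul_sq_le (f g : C(X, ℝ)) (n N : ℕ) :
    ∑ l ∈ Finset.Ico n N, e.coeff (f * g) l ^ 2 ≤
      2 * ‖f‖ ^ 2 * (∑' k, if n ≤ 2 * k then e.coeff g k ^ 2 else 0) +
      2 * ‖e.lowPart n g‖ ^ 2 * ∑' k, if n ≤ 2 * k then e.coeff f k ^ 2 else 0 := by
  set h := f * (g - e.lowPart n g) + (f - e.lowPart n f) * e.lowPart n g with h_def
  have mul_eq : f * g = h + e.lowPart n f * e.lowPart n g := by rw [h_def]; ring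
  calc ∑ l ∈ Finset.Ico n N, e.coeff (f * g) l ^ 2
      = ∑ l ∈ Finset.Ico n N, e.coeff h l ^ 2 := by
        refine Finset.sum_congr rfl fun l hl ↦ ?_
        rw [mul_eq, coeff_add, Pi.add_apply,
          e.coeff_lowPart_mul_lowPart f g (Finset.mem_Ico.1 hl).1, add_zero]
    _ ≤ ∫ x, h x ^ 2 ∂μ := sum_le_hasSum _ (fun _ _ ↦ sq_nonneg _) (e.hasSum_sq_coeff h)
    _ ≤ _ := by
        rw [← integral_sub_lowPart_sq, ← integral_sub_lowPart_sq]
        exact integral_mul_add_mul_sq_le ..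

lemma sum_Ico_coeff_mul_sq_le_tsum [μ.IsOpenPosMeasure] {f g : C(X, ℝ)} (hs : e.Embeds s)
    (hf : e.MemSobolev s f) (hg : e.MemSobolev s g) (n N : ℕ) :
    ∑ l ∈ Finset.Ico n N, e.coeff (f * g) l ^ 2 ≤
      ∑' k, if n ≤ 2 * k then 2 * e.embeddingConst s *
        (e.sobolevSq s f * e.coeff g k ^ 2 + e.sobolevSq s g * e.coeff f k ^ 2) else 0 := by
  have summable_tail (h : C(X, ℝ)) : Summable fun k ↦ if n ≤ 2 * k then e.coeff h k ^ 2 else 0 :=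
    (e.hasSum_sq_coeff h).summable.of_nonneg_of_le (fun k ↦ by positivity) fun k ↦ by
      split_ifs <;> simp [sq_nonneg]
  calc ∑ l ∈ Finset.Ico n N, e.coeff (f * g) l ^ 2
      ≤ 2 * ‖f‖ ^ 2 * (∑' k, if n ≤ 2 * k then e.coeff g k ^ 2 else 0) +
        2 * ‖e.lowPart n g‖ ^ 2 * ∑' k, if n ≤ 2 * k then e.coeff f k ^ 2 else 0 :=
        e.sum_Ico_coeff_mul_sq_le f g n N
    _ ≤ 2 * (e.embeddingConst s * e.sobolevSq s f) *
          (∑' k, if n ≤ 2 * k then e.coeff g k ^ 2 else 0) +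
        2 * (e.embeddingConst s * e.sobolevSq s g) *
          ∑' k, if n ≤ 2 * k then e.coeff f k ^ 2 else 0 := by
        gcongr
        exacts [e.norm_sq_le hs hf, e.norm_lowPart_sq_le hs hg n]
    _ = _ := by
        rw [← tsum_mul_left, ← tsum_mul_left, ← Summable.tsum_add
          ((summable_tail g).mul_left _) ((summable_tail f).mul_left _)]
        congr! 2 with k
        split_ifs <;> ring

lemma sum_range_coeff_mul_le [μ.IsOpenPosMeasure] {f g : C(X, ℝ)} (hs₀ : 0 < s)
    (hs : e.Embeds s) (hf : e.MemSobolev s f) (hg : e.MemSobolev s g) (N : ℕ) :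
    ∑ l ∈ Finset.range N, (l + 1 : ℝ) ^ (2 * s) * e.coeff (f * g) l ^ 2 ≤
      2 ^ (2 * s) * (4 * e.embeddingConst s) * e.sobolevSq s f * e.sobolevSq s g := by
  have K_nonneg := (e.embeddingConst_pos hs).le
  have hsum : HasSum (fun k : ℕ ↦ (k + 1 : ℝ) ^ (2 * s) * (2 * e.embeddingConst s *
        (e.sobolevSq s f * e.coeff g k ^ 2 + e.sobolevSq s g * e.coeff f k ^ 2)))
      (2 * e.embeddingConst s *
        (e.sobolevSq s f * e.sobolevSq s g + e.sobolevSq s g * e.sobolevSq s f)) := by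
    refine (((hg.hasSum.mul_left (e.sobolevSq s f)).add
      (hf.hasSum.mul_left (e.sobolevSq s g))).mul_left (2 * e.embeddingConst s)).congr_fun
        fun k ↦ ?_
    ring
  refine (sum_rpow_mul_le_of_tail_le (by linarith) (fun k ↦ ?_) hsum.summable
    (e.sum_Ico_coeff_mul_sq_le_tsum hs hf hg) N).trans_eq ?_
  · have := e.sobolevSq_nonneg s f
    have := e.sobolevSq_nonneg s g
    positivity
  · rw [hsum.tsum_eq]
    ring

theorem MemSobolev.mul [μ.IsOpenPosMeasure] {e : GradedHilbertBasis μ} {f g : C(X, ℝ)}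
    (hf : e.MemSobolev s f) (hg : e.MemSobolev s g) (hs₀ : 0 < s) (hs : e.Embeds s) :
    e.MemSobolev s (f * g) :=
  summable_of_sum_range_le (fun _ ↦ by positivity) (e.sum_range_coeff_mul_le hs₀ hs hf hg)

theorem sobolevSq_mul_le [μ.IsOpenPosMeasure] {f g : C(X, ℝ)} (hs₀ : 0 < s) (hs : e.Embeds s)
    (hf : e.MemSobolev s f) (hg : e.MemSobolev s g) :
    e.sobolevSq s (f * g) ≤
      2 ^ (2 * s) * (4 * e.embeddingConst s) * e.sobolevSq s f * e.sobolevSq s g :=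
  tsum_le_of_sum_range_le (fun _ ↦ by positivity) (e.sum_range_coeff_mul_le hs₀ hs hf hg)

end GradedHilbertBasis
end GradedBasis

section Legendre

open Polynomial

lemma derivative_X_sq_sub_one_pow {R : Type*} [CommRing R] (n : ℕ) :
    (X ^ 2 - 1) * derivative ((X ^ 2 - 1 : R[X]) ^ n) = 2 * (n : R[X]) * X * (X ^ 2 - 1) ^ n := by
  cases n with
  | zero => simp
  | succ n =>
    simp only [derivative_pow, derivative_sub, derivative_one, derivative_X, C_eq_natCast,
      add_tsub_cancel_right]
    push_cast
    ring

lemma iterate_derivative_X_sq_sub_one_pow {R : Type*} [CommRing R] (n k : ℕ) :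
    (X ^ 2 - 1) * derivative^[k + 2] ((X ^ 2 - 1 : R[X]) ^ n) +
        2 * (k + 1 : R[X]) * X * derivative^[k + 1] ((X ^ 2 - 1) ^ n) +
        (k * (k + 1) : R[X]) * derivative^[k] ((X ^ 2 - 1) ^ n) =
      2 * (n : R[X]) * X * derivative^[k + 1] ((X ^ 2 - 1) ^ n) +
        2 * (n * (k + 1) : R[X]) * derivative^[k] ((X ^ 2 - 1) ^ n) := by
  induction k with
  | zero =>
    have h := congrArg derivative (derivative_X_sq_sub_one_pow (R := R) n)
    simp only [derivative_mul, derivative_sub, derivative_X_sq, derivative_one, derivative_X,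
      derivative_natCast, derivative_ofNat, C_ofNat] at h
    simp only [zero_add, Function.iterate_succ_apply', Function.iterate_zero_apply]
    push_cast
    linear_combination h
  | succ k ih =>
    have h := congrArg derivative ih
    simp only [Function.iterate_succ_apply', derivative_mul, derivative_add, derivative_sub,
      derivative_X_sq, derivative_one, derivative_X, derivative_natCast, derivative_ofNat,
      C_ofNat] at h ⊢
    push_cast
    linear_combination h

lemma legendreP_ode (n : ℕ) :
    (1 - X ^ 2) * derivative (derivative (legendreP n)) - 2 * X * derivative (legendreP n) +
      (n * (n + 1) : ℝ[X]) * legendreP n = 0 := by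
  have h := iterate_derivative_X_sq_sub_one_pow (R := ℝ) n n
  simp only [Function.iterate_succ_apply'] at h
  simp only [legendreP, derivative_C_mul]
  linear_combination -C ((2 ^ n * n.factorial : ℝ)⁻¹) * h

lemma eval_legendreP_ode (n : ℕ) (x : ℝ) :
    (1 - x ^ 2) * (derivative (derivative (legendreP n))).eval x -
      2 * x * (derivative (legendreP n)).eval x + n * (n + 1) * (legendreP n).eval x = 0 := by
  simpa using congrArg (eval x) (legendreP_ode n)

lemma eval_legendreP_of_sq_eq_one (n : ℕ) {c : ℝ} (hc : c ^ 2 = 1) :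
    (legendreP n).eval c = c ^ n := by
  have C_sq : (C c : ℝ[X]) ^ 2 = 1 := by rw [← C_pow, hc, C_1]
  have factor : (X ^ 2 - 1 : ℝ[X]) ^ n = (X - C c) ^ n * (X + C c) ^ n := by
    rw [← mul_pow]
    congr 1
    linear_combination C_sq
  have h := aeval_iterate_derivative_self (A := ℝ) ((X ^ 2 - 1 : ℝ[X]) ^ n) n c
    (by simpa using factor)
  rw [coe_aeval_eq_eval, eval_pow, eval_add, eval_X, eval_C, nsmul_eq_mul, ← two_mul,
    mul_pow] at h
  rw [legendreP, eval_mul, h, eval_C]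
  field_simp

lemma degree_legendreP (n : ℕ) : (legendreP n).degree = n := by
  have hX : (X ^ 2 - 1 : ℝ[X]) = X ^ 2 - C 1 := by rw [C_1]
  have natDegree_eq : ((X ^ 2 - 1 : ℝ[X]) ^ n).natDegree = n + n := by
    rw [hX, natDegree_pow, natDegree_X_pow_sub_C, mul_two]
  have coeff_eq_one : ((X ^ 2 - 1 : ℝ[X]) ^ n).coeff (n + n) = 1 := by
    rw [← natDegree_eq, hX]
    exact ((monic_X_pow_sub_C 1 two_ne_zero).pow n).coeff_natDegree
  refine degree_eq_of_le_of_coeff_ne_zero (natDegree_le_iff_degree_le.1 ?_) ?_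
  · calc (legendreP n).natDegree
        ≤ (derivative^[n] ((X ^ 2 - 1 : ℝ[X]) ^ n)).natDegree := natDegree_C_mul_le _ _
      _ ≤ ((X ^ 2 - 1 : ℝ[X]) ^ n).natDegree - n := natDegree_iterate_derivative _ _
      _ = n := by rw [natDegree_eq, add_tsub_cancel_right]
  · rw [legendreP, coeff_C_mul, coeff_iterate_derivative, coeff_eq_one, nsmul_one]
    have : ((n + n).descFactorial n : ℝ) ≠ 0 := by
      exact_mod_cast mt Nat.descFactorial_eq_zero_iff_lt.1 (by lia)
    positivity

/-- The Legendre polynomials as a sequence of polynomials of increasing degree. -/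
def legendreSequence : Polynomial.Sequence ℝ := ⟨legendreP, degree_legendreP⟩

/- `n (n + 1) P² + (1 - x²) P'²` has derivative `2 x P'²`, so on `[-1, 1]` it is largest at `±1`,
where it equals `n (n + 1)`. -/
lemma legendreP_energy_le (n : ℕ) {x : ℝ} (hx : x ∈ Set.Icc (-1 : ℝ) 1) :
    n * (n + 1) * (legendreP n).eval x ^ 2 + (1 - x ^ 2) * (derivative (legendreP n)).eval x ^ 2 ≤
      n * (n + 1) := by
  set P := legendreP n
  let energy (x : ℝ) : ℝ := n * (n + 1) * P.eval x ^ 2 + (1 - x ^ 2) * P.derivative.eval x ^ 2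
  have energy_hasDerivAt (x : ℝ) : HasDerivAt energy (2 * x * P.derivative.eval x ^ 2) x := by
    refine ((((P.hasDerivAt x).pow 2).const_mul (n * (n + 1) : ℝ)).add
      ((((hasDerivAt_id x).pow 2).const_sub 1).mul
        ((P.derivative.hasDerivAt x).pow 2))).congr_deriv ?_
    simp only [Nat.cast_ofNat, Nat.add_one_sub_one, pow_one, id_eq, mul_one, Pi.pow_apply, neg_mul]
    linear_combination 2 * P.derivative.eval x * eval_legendreP_ode n x
  have energy_of_sq_eq_one {c : ℝ} (hc : c ^ 2 = 1) : energy c = n * (n + 1) := by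
    simp only [energy, P, hc, eval_legendreP_of_sq_eq_one n hc, ← pow_mul]
    rw [mul_comm n 2, pow_mul, hc]
    ring
  have energy_continuousOn (S : Set ℝ) : ContinuousOn energy S := by fun_prop
  have energy_differentiableOn (S : Set ℝ) : DifferentiableOn ℝ energy S := fun y _ ↦
    (energy_hasDerivAt y).differentiableAt.differentiableWithinAt
  change energy x ≤ _
  rcases le_total 0 x with h | h
  · rw [← energy_of_sq_eq_one (c := 1) (by norm_num)]
    refine monotoneOn_of_deriv_nonneg (convex_Icc 0 1) (energy_continuousOn _)
      (energy_differentiableOn _) (fun y hy ↦ ?_) ⟨h, hx.2⟩ (by simp) hx.2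
    rw [interior_Icc] at hy
    rw [(energy_hasDerivAt y).deriv]
    have := hy.1
    positivity
  · rw [← energy_of_sq_eq_one (c := -1) (by norm_num)]
    refine antitoneOn_of_deriv_nonpos (convex_Icc (-1) 0) (energy_continuousOn _)
      (energy_differentiableOn _) (fun y hy ↦ ?_) (by simp) ⟨hx.1, h⟩ hx.1
    rw [interior_Icc] at hy
    rw [(energy_hasDerivAt y).deriv]
    exact mul_nonpos_of_nonpos_of_nonneg (by linarith [hy.2]) (sq_nonneg _)

lemma abs_eval_legendreP_le_one (n : ℕ) {x : ℝ} (hx : x ∈ Set.Icc (-1 : ℝ) 1) :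
    |(legendreP n).eval x| ≤ 1 := by
  rcases n.eq_zero_or_pos with rfl | hn
  · simp [legendreP]
  have one_sub_sq_nonneg : 0 ≤ 1 - x ^ 2 := by nlinarith [hx.1, hx.2]
  have weight_pos : (0 : ℝ) < n * (n + 1) := by positivity
  rw [← sq_le_one_iff_abs_le_one]
  refine le_of_mul_le_mul_left ?_ weight_pos
  calc (n * (n + 1) : ℝ) * (legendreP n).eval x ^ 2
      ≤ (n * (n + 1) : ℝ) * (legendreP n).eval x ^ 2 +
          (1 - x ^ 2) * (derivative (legendreP n)).eval x ^ 2 :=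
        le_add_of_nonneg_right (by positivity)
    _ ≤ (n * (n + 1) : ℝ) * 1 := (legendreP_energy_le n hx).trans_eq (mul_one _).symm

lemma integral_legendreP_mul_of_ne {j k : ℕ} (h : j ≠ k) :
    ∫ x in (-1 : ℝ)..1, (legendreP j).eval x * (legendreP k).eval x = 0 := by
  set P := legendreP j
  set Q := legendreP k
  have wronskian_hasDerivAt (x : ℝ) : HasDerivAt
      (fun x ↦ (1 - x ^ 2) * (Q.derivative.eval x * P.eval x - P.derivative.eval x * Q.eval x))
      ((j * (j + 1) - k * (k + 1)) * (P.eval x * Q.eval x)) x := by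
    refine ((((hasDerivAt_id x).pow 2).const_sub 1).mul
      (((Q.derivative.hasDerivAt x).mul (P.hasDerivAt x)).sub
        ((P.derivative.hasDerivAt x).mul (Q.hasDerivAt x)))).congr_deriv ?_
    simp only [Nat.cast_ofNat, id_eq, Nat.add_one_sub_one, pow_one, mul_one, Pi.sub_apply,
      Pi.mul_apply, neg_mul, Pi.pow_apply]
    linear_combination P.eval x * eval_legendreP_ode k x - Q.eval x * eval_legendreP_ode j x
  have integral_eq := intervalIntegral.integral_eq_sub_of_hasDerivAt
    (fun x _ ↦ wronskian_hasDerivAt x)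
    (Continuous.intervalIntegrable (by fun_prop) (-1) 1)
  rw [intervalIntegral.integral_const_mul] at integral_eq
  have eigenvalue_ne : (j * (j + 1) - k * (k + 1) : ℝ) ≠ 0 := by
    have : (j : ℝ) - k ≠ 0 := sub_ne_zero.2 (Nat.cast_injective.ne h)
    rw [show (j * (j + 1) - k * (k + 1) : ℝ) = (j - k) * (j + k + 1) by ring]
    positivity
  exact (mul_eq_zero.1 (integral_eq.trans (by norm_num))).resolve_left eigenvalue_ne

lemma integral_mul_legendreP_of_degree_lt {n : ℕ} {q : ℝ[X]} (hq : q.degree < n) :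
    ∫ x in (-1 : ℝ)..1, q.eval x * (legendreP n).eval x = 0 := by
  have h_mem : q ∈ Submodule.span ℝ (legendreSequence '' Set.Iio n) := by
    rw [legendreSequence.span_degreeLT fun i _ ↦
      (leadingCoeff_ne_zero.2 (legendreSequence.ne_zero i)).isUnit]
    exact mem_degreeLT.2 hq
  clear hq
  have integrable (p : ℝ[X]) :
      IntervalIntegrable (fun x ↦ p.eval x * (legendreP n).eval x) volume (-1) 1 :=
    Continuous.intervalIntegrable (by fun_prop) _ _
  induction h_mem using Submodule.span_induction with
  | mem p hp =>
    obtain ⟨i, hi, rfl⟩ := hp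
    exact integral_legendreP_mul_of_ne (ne_of_lt hi)
  | zero => simp
  | add p r _ _ hp hr =>
    simp only [eval_add, add_mul]
    rw [intervalIntegral.integral_add (integrable p) (integrable r), hp, hr, add_zero]
  | smul c p _ hp =>
    simp only [eval_smul, smul_eq_mul, mul_assoc, intervalIntegral.integral_const_mul]
    rw [hp, mul_zero]

lemma degree_X_mul_derivative_sub_lt {R : Type*} [CommRing R] {p : R[X]} {n : ℕ}
    (hp : p.degree = n) : (X * derivative p - C (n : R) * p).degree < (n : WithBot ℕ) := by
  rw [degree_lt_iff_coeff_zero]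
  intro m hm
  have coeff_X_mul_derivative : (X * derivative p).coeff m = m * p.coeff m := by
    cases m with
    | zero => simp
    | succ m => rw [coeff_X_mul, coeff_derivative, Nat.cast_succ, mul_comm]
  rw [coeff_sub, coeff_C_mul, coeff_X_mul_derivative, ← sub_mul]
  rcases hm.eq_or_lt with rfl | h
  · rw [sub_self, zero_mul]
  · rw [coeff_eq_zero_of_degree_lt (hp.trans_lt (by exact_mod_cast h)), mul_zero]

/- `d/dx (x P²) = (2 n + 1) P² + 2 (x P' - n P) P`, where `x P' - n P` has degree below `n`. -/
lemma integral_legendreP_sq (n : ℕ) :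
    ∫ x in (-1 : ℝ)..1, (legendreP n).eval x ^ 2 = 2 / (2 * n + 1) := by
  set P := legendreP n
  set Q := X * P.derivative - C (n : ℝ) * P
  have h_deriv (x : ℝ) : HasDerivAt (fun x ↦ x * P.eval x ^ 2)
      ((2 * n + 1) * P.eval x ^ 2 + 2 * (Q.eval x * P.eval x)) x := by
    refine ((hasDerivAt_id x).mul ((P.hasDerivAt x).pow 2)).congr_deriv ?_
    simp only [Pi.pow_apply, one_mul, id_eq, Nat.cast_ofNat, Nat.add_one_sub_one, pow_one,
      map_natCast, eval_sub, eval_mul, eval_X, eval_natCast, Q]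
    ring
  have integral_Q : ∫ x in (-1 : ℝ)..1, Q.eval x * P.eval x = 0 :=
    integral_mul_legendreP_of_degree_lt (degree_X_mul_derivative_sub_lt (degree_legendreP n))
  have integral_eq := intervalIntegral.integral_eq_sub_of_hasDerivAt (fun x _ ↦ h_deriv x)
    (Continuous.intervalIntegrable (by fun_prop) (-1) 1)
  have eval_sq {c : ℝ} (hc : c ^ 2 = 1) : P.eval c ^ 2 = 1 := by
    rw [eval_legendreP_of_sq_eq_one n hc, ← pow_mul, mul_comm, pow_mul, hc, one_pow]
  rw [intervalIntegral.integral_add (Continuous.intervalIntegrable (by fun_prop) _ _)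
    (Continuous.intervalIntegrable (by fun_prop) _ _), intervalIntegral.integral_const_mul,
    intervalIntegral.integral_const_mul, integral_Q, eval_sq (one_pow 2),
    eval_sq (by norm_num)] at integral_eq
  rw [eq_div_iff (by positivity)]
  linarith

end Legendre

section LegendreBasis

lemma isOpenPosMeasure_comap_subtype {X : Type*} [TopologicalSpace X] [MeasurableSpace X]
    [OpensMeasurableSpace X] (μ : Measure X) [μ.IsOpenPosMeasure] {S : Set X}
    (hS : MeasurableSet S) (h : S ⊆ closure (interior S)) :
    (μ.comap (Subtype.val : S → X)).IsOpenPosMeasure where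
  open_pos := by
    rintro _ ⟨V, hV, rfl⟩ ⟨x, hx⟩
    have inter_nonempty : (V ∩ interior S).Nonempty := mem_closure_iff.1 (h x.2) V hV hx
    rw [comap_subtype_coe_apply hS, Subtype.image_preimage_coe]
    have h_subset : V ∩ interior S ⊆ S ∩ V := fun y hy ↦ ⟨interior_subset hy.2, hy.1⟩
    exact (((hV.inter isOpen_interior).measure_pos μ inter_nonempty).trans_le
      (measure_mono h_subset)).ne'

/-- Lebesgue measure on the compact interval `[-1, 1]`. -/
def legendreMeasure : Measure (Set.Icc (-1 : ℝ) 1) :=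
  (volume : Measure ℝ).comap Subtype.val

instance : IsFiniteMeasure legendreMeasure where
  measure_univ_lt_top := by
    rw [legendreMeasure, comap_subtype_coe_apply measurableSet_Icc, Set.image_univ,
      Subtype.range_coe]
    exact measure_Icc_lt_top

instance : legendreMeasure.IsOpenPosMeasure :=
  isOpenPosMeasure_comap_subtype volume measurableSet_Icc
    (by rw [interior_Icc, closure_Ioo (by norm_num)])

lemma integral_legendreMeasure (F : ℝ → ℝ) :
    ∫ x, F x ∂legendreMeasure = ∫ x in (-1 : ℝ)..1, F x := by
  rw [legendreMeasure, integral_subtype_comap measurableSet_Icc, integral_Icc_eq_integral_Ioc,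
    intervalIntegral.integral_of_le (by norm_num)]

/-- The Legendre polynomials, normalized in `L²([-1, 1])`. -/
def legendreFn (l : ℕ) : C(Set.Icc (-1 : ℝ) 1, ℝ) :=
  √((2 * l + 1) / 2) • (legendreP l).toContinuousMapOn _

lemma legendreFn_apply (l : ℕ) (x : Set.Icc (-1 : ℝ) 1) :
    legendreFn l x = √((2 * l + 1) / 2) * (legendreP l).eval x.1 := rfl

lemma orthonormal_legendreFn :
    Orthonormal ℝ fun l ↦ ContinuousMap.toLp 2 legendreMeasure ℝ
      (legendreFn l) := by
  rw [orthonormal_iff_ite]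
  intro i j
  have inner_eq : inner ℝ (ContinuousMap.toLp 2 legendreMeasure ℝ (legendreFn i))
      (ContinuousMap.toLp 2 legendreMeasure ℝ (legendreFn j)) = √((2 * i + 1) / 2) *
        √((2 * j + 1) / 2) * ∫ x in (-1 : ℝ)..1, (legendreP i).eval x * (legendreP j).eval x := by
    rw [ContinuousMap.inner_toLp, ← integral_legendreMeasure, ← integral_const_mul]
    refine integral_congr_ae (.of_forall fun x ↦ ?_)
    simp only [legendreFn_apply, conj_trivial]
    ring
  rw [inner_eq]
  split_ifs with h
  · subst h
    simp only [← sq, integral_legendreP_sq]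
    rw [sq_sqrt (by positivity)]
    field_simp
  · rw [integral_legendreP_mul_of_ne h, mul_zero]

lemma span_legendreFn :
    Submodule.span ℝ (Set.range legendreFn) =
      (polynomialFunctions (Set.Icc (-1 : ℝ) 1)).toSubmodule := by
  have legendreP_mem (l : ℕ) : (legendreP l).toContinuousMapOn (Set.Icc (-1 : ℝ) 1) ∈
      Submodule.span ℝ (Set.range legendreFn) := by
    rw [← inv_smul_smul₀ (sqrt_ne_zero'.2 (by positivity : (0 : ℝ) < (2 * l + 1) / 2))
      ((legendreP l).toContinuousMapOn (Set.Icc (-1 : ℝ) 1))]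
    exact Submodule.smul_mem _ _ (Submodule.subset_span ⟨l, rfl⟩)
  refine le_antisymm (Submodule.span_le.2 ?_) ?_
  · rintro _ ⟨l, rfl⟩
    exact Submodule.smul_mem _ _ ⟨legendreP l, trivial, rfl⟩
  · rintro _ ⟨p, -, rfl⟩
    have p_mem : p ∈ Submodule.span ℝ (Set.range legendreSequence) := by
      rw [legendreSequence.span fun i ↦
        (Polynomial.leadingCoeff_ne_zero.2 (legendreSequence.ne_zero i)).isUnit]
      trivial
    refine (Submodule.span_le (p := (Submodule.span ℝ (Set.range legendreFn)).comap
      (Polynomial.toContinuousMapOnAlgHom (Set.Icc (-1 : ℝ) 1)).toLinearMap)).2 ?_ p_mem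
    rintro _ ⟨l, rfl⟩
    exact legendreP_mem l

lemma span_toLp_legendreFn_topologicalClosure :
    (Submodule.span ℝ (Set.range fun l ↦ ContinuousMap.toLp 2
      legendreMeasure ℝ (legendreFn l))).topologicalClosure = ⊤ := by
  have h_dense : (Submodule.span ℝ (Set.range legendreFn)).topologicalClosure = ⊤ := by
    rw [span_legendreFn]
    exact congrArg Subalgebra.toSubmodule (polynomialFunctions_closure_eq_top (-1) 1)
  have h := (ContinuousMap.toLp_denseRange (p := 2) ℝ legendreMeasure ℝ
    ENNReal.ofNat_ne_top).topologicalClosure_map_submodule h_dense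
  rwa [Submodule.map_span, ← Set.range_comp] at h

lemma integral_legendreFn_mul_mul {i j l : ℕ} (h : i + j < l) :
    ∫ x, legendreFn i x * legendreFn j x * legendreFn l x ∂legendreMeasure = 0 := by
  have degree_lt : (legendreP i * legendreP j).degree < (l : WithBot ℕ) := by
    rw [Polynomial.degree_mul, degree_legendreP, degree_legendreP]
    exact_mod_cast h
  calc ∫ x, legendreFn i x * legendreFn j x * legendreFn l x ∂legendreMeasure
      = ∫ x : Set.Icc (-1 : ℝ) 1, √((2 * i + 1) / 2) * √((2 * j + 1) / 2) *
          √((2 * l + 1) / 2) * ((legendreP i * legendreP j).eval x.1 * (legendreP l).eval x.1)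
          ∂legendreMeasure := by
        refine integral_congr_ae (.of_forall fun x ↦ ?_)
        simp only [legendreFn_apply, Polynomial.eval_mul]
        ring
    _ = 0 := by
        rw [integral_const_mul, integral_legendreMeasure fun x ↦
          (legendreP i * legendreP j).eval x * (legendreP l).eval x,
          integral_mul_legendreP_of_degree_lt degree_lt, mul_zero]

/-- The graded Hilbert basis of normalized Legendre polynomials of `L²([-1, 1])`. -/
def legendreBasis : GradedHilbertBasis legendreMeasure where
  toHilbertBasis := .mk orthonormal_legendreFn span_toLp_legendreFn_topologicalClosure.ge
  fn := legendreFn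
  toHilbertBasis_apply l := by rw [HilbertBasis.coe_mk]
  integral_mul_mul_eq_zero := integral_legendreFn_mul_mul

lemma norm_legendreFn_le (l : ℕ) : ‖legendreFn l‖ ≤ √((2 * l + 1) / 2) := by
  refine (ContinuousMap.norm_le _ (sqrt_nonneg _)).2 fun x ↦ ?_
  rw [legendreFn_apply, norm_mul, norm_eq_abs, norm_eq_abs, abs_of_nonneg (sqrt_nonneg _)]
  exact mul_le_of_le_one_right (sqrt_nonneg _) (abs_eval_legendreP_le_one l x.2)

lemma legendreBasis_embeds {s : ℝ} (hs : 1 < s) : legendreBasis.Embeds s := by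
  have h_zeta : Summable fun l : ℕ ↦ (l + 1 : ℝ) ^ (1 - 2 * s) := by
    simpa using (summable_nat_add_iff 1).2 (summable_nat_rpow.2 (by linarith : 1 - 2 * s < -1))
  refine h_zeta.of_nonneg_of_le (fun l ↦ by positivity) fun l ↦ ?_
  have norm_sq_le : ‖legendreFn l‖ ^ 2 ≤ (l + 1 : ℝ) := by
    calc ‖legendreFn l‖ ^ 2 ≤ √((2 * l + 1 : ℝ) / 2) ^ 2 := by gcongr; exact norm_legendreFn_le l
      _ ≤ (l + 1 : ℝ) := by rw [sq_sqrt (by positivity)]; linarith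
  rw [rpow_sub (by positivity), rpow_one]
  gcongr
  exact norm_sq_le

end LegendreBasis

section ZonalFunctions

/-- The point `sin θ` of the interval `[-1, 1]`. -/
def sinIcc (θ : ℝ) : Set.Icc (-1 : ℝ) 1 := ⟨sin θ, sin_mem_Icc θ⟩

/-- The zonal (axially symmetric) function on the sphere with profile `f`, regarded as a function
of the height `sin θ`. -/
def zonal (f : C(Set.Icc (-1 : ℝ) 1, ℝ)) (θ _φ : ℝ) : ℂ := f (sinIcc θ)

lemma continuous_sinIcc : Continuous sinIcc := continuous_sin.subtype_mk _

instance : IsFiniteMeasure sphereMeasure := by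
  have h_cos : ContinuousOn (fun p : ℝ × ℝ ↦ cos p.1)
      (Set.Icc (-(π / 2)) (π / 2) ×ˢ Set.Icc (-π) π) := by fun_prop
  exact isFiniteMeasure_withDensity_ofReal
    ((h_cos.integrableOn_compact (isCompact_Icc.prod isCompact_Icc)).mono_set
      (Set.prod_mono le_rfl Set.Ico_subset_Icc_self)).hasFiniteIntegral

lemma integral_mul_sphereMeasure (f g : ℝ → ℂ) :
    ∫ p : ℝ × ℝ, f p.1 * g p.2 ∂sphereMeasure =
      (∫ θ in (-(π / 2))..(π / 2), cos θ * f θ) * ∫ φ in (-π)..π, g φ := by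
  rw [sphereMeasure, integral_withDensity_eq_integral_toReal_smul (by fun_prop) (by simp),
    intervalIntegral.integral_of_le (by linarith [pi_pos]),
    intervalIntegral.integral_of_le (by linarith [pi_pos]),
    ← integral_Icc_eq_integral_Ioc, ← integral_Ico_eq_integral_Ioc, ← setIntegral_prod_mul]
  refine setIntegral_congr_fun (measurableSet_Icc.prod measurableSet_Ico) fun p hp ↦ ?_
  simp only [ENNReal.toReal_ofReal (cos_nonneg_of_mem_Icc hp.1), Complex.real_smul]
  ring

lemma integral_conj_exp_int_mul {m : ℤ} (hm : m ≠ 0) :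
    ∫ φ in (-π)..π, (starRingEnd ℂ) (Complex.exp (Complex.I * m * (φ : ℂ))) = 0 := by
  have conj_exp (φ : ℝ) : (starRingEnd ℂ) (Complex.exp (Complex.I * m * (φ : ℂ))) =
      Complex.exp (-(m * Complex.I) * (φ : ℂ)) := by
    rw [← Complex.exp_conj]
    congr 1
    simp only [map_mul, Complex.conj_I, Complex.conj_ofReal, map_intCast]
    ring
  have exp_periodic : Complex.exp (-(m * Complex.I) * (π : ℝ)) =
      Complex.exp (-(m * Complex.I) * ((-π : ℝ) : ℂ)) :=
    Complex.exp_eq_exp_iff_exists_int.2 ⟨-m, by push_cast; ring⟩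
  simp_rw [conj_exp]
  rw [integral_exp_mul_complex (by simpa using hm), exp_periodic, sub_self, zero_div]

lemma integral_cos_mul_comp_sinIcc (f : C(Set.Icc (-1 : ℝ) 1, ℝ)) :
    ∫ θ in (-(π / 2))..(π / 2), cos θ * f (sinIcc θ) = ∫ x, f x ∂legendreMeasure := by
  set F : ℝ → ℝ := Set.IccExtend (by norm_num) f
  have F_sin (θ : ℝ) : F (sin θ) = f (sinIcc θ) := Set.IccExtend_of_mem _ _ (sin_mem_Icc θ)
  have F_coe (x : Set.Icc (-1 : ℝ) 1) : F x = f x := Set.IccExtend_val _ _ x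
  calc ∫ θ in (-(π / 2))..(π / 2), cos θ * f (sinIcc θ)
      = ∫ θ in (-(π / 2))..(π / 2), (F ∘ sin) θ * cos θ := by
        simp only [Function.comp_apply, F_sin, mul_comm]
    _ = ∫ x in (-1 : ℝ)..1, F x := by
        rw [intervalIntegral.integral_comp_mul_deriv (fun x _ ↦ hasDerivAt_sin x)
          continuous_cos.continuousOn f.continuous.Icc_extend', sin_neg, sin_pi_div_two]
    _ = ∫ x, f x ∂legendreMeasure := by
        simp only [← integral_legendreMeasure, F_coe]

lemma Ylm_zero (l : ℕ) (θ φ : ℝ) :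
    Ylm l 0 θ φ = (((√(2 * π))⁻¹ * legendreFn l (sinIcc θ) : ℝ) : ℂ) := by
  have alphaY_zero : alphaY l 0 = (√(2 * π))⁻¹ * √((2 * l + 1) / 2) := by
    simp only [alphaY, abs_zero, Int.natAbs_zero, Nat.sub_zero, add_zero, EuclideanDomain.zero_div,
      zpow_zero, one_mul]
    rw [mul_div_mul_right _ _ (by positivity), ← sqrt_inv, ← sqrt_mul (by positivity)]
    congr 1
    field_simp
    ring
  have assocLegendre_zero (x : ℝ) : assocLegendre l 0 x = (legendreP l).eval x := by
    simp [assocLegendre]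
  simp only [Ylm, Int.natAbs_zero, assocLegendre_zero, alphaY_zero, Int.cast_zero, mul_zero,
    zero_mul, Complex.exp_zero, mul_one, mul_assoc, legendreFn_apply, sinIcc]

lemma flCoeff_zonal_zero (f : C(Set.Icc (-1 : ℝ) 1, ℝ)) (l : ℕ) :
    flCoeff (zonal f) l 0 = ((√(2 * π) * legendreBasis.coeff f l : ℝ) : ℂ) := by
  let Θ (θ : ℝ) : ℂ := (((√(2 * π))⁻¹ * (f * legendreFn l) (sinIcc θ) : ℝ) : ℂ)
  let Φ (_ : ℝ) : ℂ := 1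
  have integral_Θ : ∫ θ in (-(π / 2))..(π / 2), cos θ * Θ θ =
      (((√(2 * π))⁻¹ * legendreBasis.coeff f l : ℝ) : ℂ) := by
    calc ∫ θ in (-(π / 2))..(π / 2), cos θ * Θ θ
        = ∫ θ in (-(π / 2))..(π / 2),
            (((√(2 * π))⁻¹ * (cos θ * (f * legendreFn l) (sinIcc θ)) : ℝ) : ℂ) := by
          refine intervalIntegral.integral_congr fun θ _ ↦ ?_
          simp only [Θ]
          push_cast
          ring
      _ = (((√(2 * π))⁻¹ * legendreBasis.coeff f l : ℝ) : ℂ) := by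
          rw [intervalIntegral.integral_ofReal, intervalIntegral.integral_const_mul,
            integral_cos_mul_comp_sinIcc]
          rfl
  have integral_Φ : ∫ φ in (-π)..π, Φ φ = (2 * π : ℝ) := by
    simp [Φ, two_mul]
  calc flCoeff (zonal f) l 0
      = ∫ p : ℝ × ℝ, Θ p.1 * Φ p.2 ∂sphereMeasure := by
        refine integral_congr_ae (.of_forall fun p ↦ ?_)
        simp only [zonal, Ylm_zero, Complex.conj_ofReal, ContinuousMap.mul_apply, Θ, Φ]
        push_cast
        ring
    _ = ((√(2 * π) * legendreBasis.coeff f l : ℝ) : ℂ) := by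
        rw [integral_mul_sphereMeasure, integral_Θ, integral_Φ, ← Complex.ofReal_mul]
        congr 1
        nth_rw 2 [← mul_self_sqrt two_pi_pos.le]
        field_simp

lemma flCoeff_zonal_of_ne (f : C(Set.Icc (-1 : ℝ) 1, ℝ)) (l : ℕ) {m : ℤ} (hm : m ≠ 0) :
    flCoeff (zonal f) l m = 0 := by
  let Θ (θ : ℝ) : ℂ :=
    f (sinIcc θ) * ((alphaY l m * assocLegendre l m.natAbs (sin θ) : ℝ) : ℂ)
  let Φ (φ : ℝ) : ℂ := (starRingEnd ℂ) (Complex.exp (Complex.I * m * (φ : ℂ)))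
  calc flCoeff (zonal f) l m
      = ∫ p : ℝ × ℝ, Θ p.1 * Φ p.2 ∂sphereMeasure := by
        refine integral_congr_ae (.of_forall fun p ↦ ?_)
        simp only [zonal, Ylm, map_mul, Complex.conj_ofReal, mul_assoc, Θ, Φ]
    _ = 0 := by
        rw [integral_mul_sphereMeasure, integral_conj_exp_int_mul hm, mul_zero]

lemma hasSum_sq_flCoeff_zonal_iff {s : ℝ} {f : C(Set.Icc (-1 : ℝ) 1, ℝ)} {a : ℝ} :
    HasSum (fun p : ℕ × ℤ ↦ ((p.1 : ℝ) + 1) ^ (2 * s) * ‖flCoeff (zonal f) p.1 p.2‖ ^ 2)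
      (2 * π * a) ↔
    HasSum (fun l : ℕ ↦ (l + 1 : ℝ) ^ (2 * s) * legendreBasis.coeff f l ^ 2) a := by
  have zero_off_axis : ∀ p ∉ Set.range fun l : ℕ ↦ ((l, 0) : ℕ × ℤ),
      ((p.1 : ℝ) + 1) ^ (2 * s) * ‖flCoeff (zonal f) p.1 p.2‖ ^ 2 = 0 := by
    rintro ⟨l, m⟩ hp
    have hm : m ≠ 0 := fun hm ↦ hp ⟨l, by rw [hm]⟩
    simp only [flCoeff_zonal_of_ne f l hm, norm_zero, ne_eq, OfNat.ofNat_ne_zero,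
      not_false_eq_true, zero_pow, mul_zero]
  rw [← (Prod.mk_left_injective (0 : ℤ)).hasSum_iff zero_off_axis,
    ← hasSum_mul_left_iff two_pi_pos.ne' (a₁ := a)]
  refine iff_of_eq (congrArg (HasSum · _) (funext fun l ↦ ?_))
  simp only [Function.comp_apply]
  rw [flCoeff_zonal_zero, Complex.norm_real, norm_eq_abs, sq_abs, mul_pow,
    sq_sqrt two_pi_pos.le]
  ring

lemma memLp_zonal (f : C(Set.Icc (-1 : ℝ) 1, ℝ)) :
    MemLp (fun p : ℝ × ℝ ↦ zonal f p.1 p.2) 2 sphereMeasure := by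
  have h_cont : Continuous fun p : ℝ × ℝ ↦ zonal f p.1 p.2 :=
    Complex.continuous_ofReal.comp
      (f.continuous.comp (continuous_sinIcc.comp continuous_fst))
  refine .of_bound h_cont.aestronglyMeasurable ‖f‖ (.of_forall fun p ↦ ?_)
  rw [zonal, Complex.norm_real]
  exact f.norm_coe_le_norm _

lemma memHs_zonal_iff {s : ℝ} {f : C(Set.Icc (-1 : ℝ) 1, ℝ)} :
    MemHs s (zonal f) ↔ legendreBasis.MemSobolev s f := by
  refine ⟨fun h ↦ ?_, fun h ↦ ⟨memLp_zonal f, (hasSum_sq_flCoeff_zonal_iff.2 h.hasSum).summable⟩⟩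
  have h_sum := h.2.hasSum
  rw [← mul_div_cancel₀ (∑' p : ℕ × ℤ, _) two_pi_pos.ne'] at h_sum
  exact (hasSum_sq_flCoeff_zonal_iff.1 h_sum).summable

lemma HsNorm_zonal {s : ℝ} {f : C(Set.Icc (-1 : ℝ) 1, ℝ)} (hf : legendreBasis.MemSobolev s f) :
    HsNorm s (zonal f) = √(2 * π * legendreBasis.sobolevSq s f) := by
  rw [HsNorm, (hasSum_sq_flCoeff_zonal_iff.2 hf.hasSum).tsum_eq]
  rfl

end ZonalFunctions

section Laplacian

open InnerProductSpace Topology Laplacian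
open scoped Gradient

lemma fderiv_fderiv_apply_self_nonpos_of_isLocalMax {E : Type*} [NormedAddCommGroup E]
    [NormedSpace ℝ E] {f : E → ℝ} {x : E} (hf : ContDiffAt ℝ 2 f x) (hmax : IsLocalMax f x)
    (v : E) : fderiv ℝ (fderiv ℝ f) x v v ≤ 0 := by
  set line : ℝ → E := fun t ↦ x + t • v
  have line_zero : line 0 = x := by simp [line]
  have line_tendsto : Tendsto line (𝓝 0) (𝓝 x) := by
    have : Continuous line := by fun_prop
    simpa only [line_zero] using this.tendsto 0
  have hasDerivAt_line (t : ℝ) : HasDerivAt line v t := by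
    exact (((hasDerivAt_id t).smul_const v).const_add x).congr_deriv (one_smul ℝ v)
  have deriv_comp_line : deriv (f ∘ line) =ᶠ[𝓝 0] fun t ↦ fderiv ℝ f (line t) v := by
    filter_upwards [line_tendsto.eventually (hf.eventually (by simp))] with t ht
    exact ((ht.differentiableAt two_ne_zero).hasFDerivAt.comp_hasDerivAt t
      (hasDerivAt_line t)).deriv
  have deriv_deriv_comp_line : deriv (deriv (f ∘ line)) 0 = fderiv ℝ (fderiv ℝ f) x v v := by
    have h_diff : DifferentiableAt ℝ (fderiv ℝ f) (line 0) := by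
      rw [line_zero]
      exact (hf.fderiv_right (m := 1) (by norm_num)).differentiableAt one_ne_zero
    rw [deriv_comp_line.deriv_eq, ← line_zero]
    exact ((h_diff.hasFDerivAt.comp_hasDerivAt 0 (hasDerivAt_line 0)).clm_apply
      (hasDerivAt_const 0 v)).deriv.trans (by simp)
  have max_line : IsLocalMax (f ∘ line) 0 := by
    rw [← line_zero] at hmax line_tendsto
    exact hmax.comp_tendsto line_tendsto
  -- A positive second derivative would make `0` also a local minimum, hence `f ∘ line` constant.
  by_contra! h_pos
  rw [← deriv_deriv_comp_line] at h_pos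
  have h_cont : ContinuousAt (f ∘ line) 0 :=
    (by rw [line_zero]; exact hf.continuousAt : ContinuousAt f (line 0)).comp
      (hasDerivAt_line 0).continuousAt
  have min_line := isLocalMin_of_deriv_deriv_pos h_pos max_line.deriv_eq_zero h_cont
  have const_line : f ∘ line =ᶠ[𝓝 0] fun _ ↦ (f ∘ line) 0 := by
    filter_upwards [max_line, min_line] with t h_le h_ge using le_antisymm h_le h_ge
  rw [const_line.deriv.deriv_eq] at h_pos
  simp at h_pos

variable {E : Type*} [NormedAddCommGroup E] [InnerProductSpace ℝ E] [FiniteDimensional ℝ E]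
  {f g : E → ℝ} {x : E}

lemma laplacian_eq_sum_fderiv_fderiv {ι : Type*} [Fintype ι] (b : OrthonormalBasis ι ℝ E)
    (f : E → ℝ) (x : E) : Δ f x = ∑ i, fderiv ℝ (fderiv ℝ f) x (b i) (b i) := by
  rw [laplacian_eq_iteratedFDeriv_orthonormalBasis f b]
  simp only [iteratedFDeriv_two_apply, Matrix.cons_val_zero, Matrix.cons_val_one]

lemma laplacian_nonpos_of_isLocalMax (hf : ContDiffAt ℝ 2 f x) (hmax : IsLocalMax f x) :
    Δ f x ≤ 0 := by
  rw [laplacian_eq_sum_fderiv_fderiv (stdOrthonormalBasis ℝ E)]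
  exact Finset.sum_nonpos fun i _ ↦ fderiv_fderiv_apply_self_nonpos_of_isLocalMax hf hmax _

lemma sum_fderiv_mul_fderiv {ι : Type*} [Fintype ι] (b : OrthonormalBasis ι ℝ E)
    (f g : E → ℝ) (x : E) :
    ∑ i, fderiv ℝ f x (b i) * fderiv ℝ g x (b i) = inner ℝ (∇ f x) (∇ g x) := by
  rw [← b.sum_inner_mul_inner]
  refine Finset.sum_congr rfl fun i _ ↦ ?_
  rw [inner_gradient_left, real_inner_comm, inner_gradient_left]

lemma laplacian_mul (hf : ContDiffAt ℝ 2 f x) (hg : ContDiffAt ℝ 2 g x) :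
    Δ (f * g) x = f x * Δ g x + 2 * inner ℝ (∇ f x) (∇ g x) + g x * Δ f x := by
  have fderiv_mul_eventuallyEq :
      fderiv ℝ (f * g) =ᶠ[𝓝 x] fun y ↦ f y • fderiv ℝ g y + g y • fderiv ℝ f y := by
    filter_upwards [hf.eventually (by simp), hg.eventually (by simp)] with y hfy hgy
    exact fderiv_mul (hfy.differentiableAt two_ne_zero) (hgy.differentiableAt two_ne_zero)
  have hf₁ := hf.differentiableAt two_ne_zero
  have hg₁ := hg.differentiableAt two_ne_zero
  have hf₂ := (hf.fderiv_right (m := 1) (by norm_num)).differentiableAt one_ne_zero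
  have hg₂ := (hg.fderiv_right (m := 1) (by norm_num)).differentiableAt one_ne_zero
  have hessian_mul (v : E) : fderiv ℝ (fderiv ℝ (f * g)) x v v =
      f x * fderiv ℝ (fderiv ℝ g) x v v + 2 * (fderiv ℝ f x v * fderiv ℝ g x v) +
        g x * fderiv ℝ (fderiv ℝ f) x v v := by
    rw [fderiv_mul_eventuallyEq.fderiv_eq, fderiv_fun_add (hf₁.fun_smul hg₂) (hg₁.fun_smul hf₂),
      fderiv_fun_smul hf₁ hg₂, fderiv_fun_smul hg₁ hf₂]
    simp only [add_apply, smul_apply, ContinuousLinearMap.smulRight_apply, smul_eq_mul]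
    ring
  have b := stdOrthonormalBasis ℝ E
  simp only [laplacian_eq_sum_fderiv_fderiv b, hessian_mul, Finset.sum_add_distrib,
    ← Finset.mul_sum, sum_fderiv_mul_fderiv]

lemma laplacian_comp {φ : ℝ → ℝ} (hφ : ContDiffAt ℝ 2 φ (f x)) (hf : ContDiffAt ℝ 2 f x) :
    Δ (φ ∘ f) x = deriv (deriv φ) (f x) * ‖∇ f x‖ ^ 2 + deriv φ (f x) * Δ f x := by
  have fderiv_comp_eventuallyEq :
      fderiv ℝ (φ ∘ f) =ᶠ[𝓝 x] fun y ↦ deriv φ (f y) • fderiv ℝ f y := by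
    filter_upwards [hf.continuousAt.eventually (hφ.eventually (by simp)),
      hf.eventually (by simp)] with y hφy hfy
    exact ((hφy.differentiableAt two_ne_zero).hasDerivAt.comp_hasFDerivAt y
      (hfy.differentiableAt two_ne_zero).hasFDerivAt).fderiv
  have hf₁ := hf.differentiableAt two_ne_zero
  have hf₂ := (hf.fderiv_right (m := 1) (by norm_num)).differentiableAt one_ne_zero
  have hφ₂ : HasFDerivAt (fun y ↦ deriv φ (f y)) (deriv (deriv φ) (f x) • fderiv ℝ f x) x :=
    have differentiableAt_deriv :=
      (hφ.derivWithin (m := 1) (by norm_num)).differentiableAt one_ne_zero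
    differentiableAt_deriv.hasDerivAt.comp_hasFDerivAt x hf₁.hasFDerivAt
  have hessian_comp (v : E) : fderiv ℝ (fderiv ℝ (φ ∘ f)) x v v =
      deriv (deriv φ) (f x) * (fderiv ℝ f x v * fderiv ℝ f x v) +
        deriv φ (f x) * fderiv ℝ (fderiv ℝ f) x v v := by
    rw [fderiv_comp_eventuallyEq.fderiv_eq, fderiv_fun_smul hφ₂.differentiableAt hf₂, hφ₂.fderiv]
    simp only [add_apply, smul_apply, ContinuousLinearMap.smulRight_apply, smul_eq_mul]
    ring
  have b := stdOrthonormalBasis ℝ E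
  simp only [laplacian_eq_sum_fderiv_fderiv b, hessian_comp, Finset.sum_add_distrib,
    ← Finset.mul_sum, sum_fderiv_mul_fderiv, real_inner_self_eq_norm_sq]

lemma laplacian_norm_sq (x : E) : Δ (fun y : E ↦ ‖y‖ ^ 2) x = 2 * Module.finrank ℝ E := by
  have hessian_norm_sq (v : E) : fderiv ℝ (fderiv ℝ fun y : E ↦ ‖y‖ ^ 2) x v v = 2 * ‖v‖ ^ 2 := by
    rw [show fderiv ℝ (fun y : E ↦ ‖y‖ ^ 2) = ⇑(2 • innerSL ℝ : E →L[ℝ] E →L[ℝ] ℝ) from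
      funext fun y ↦ fderiv_norm_sq_apply y, ContinuousLinearMap.fderiv, two_mul,
      ← two_nsmul, ← real_inner_self_eq_norm_sq]
    rfl
  simp [laplacian_eq_sum_fderiv_fderiv (stdOrthonormalBasis ℝ E), hessian_norm_sq, mul_comm]

end Laplacian

section MaximumPrinciple

open InnerProductSpace Topology Laplacian

variable {E : Type*} [NormedAddCommGroup E] [InnerProductSpace ℝ E] [FiniteDimensional ℝ E]
  [Nontrivial E] {w : E → ℝ} {U : Set E} {c : ℝ} {x : E}

lemma isMaxOn_add_norm_sq_notMem {ε : ℝ} (hε : 0 < ε) (hU : IsOpen U) (hw : HarmonicOnNhd w U)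
    (hmax : IsMaxOn (w + ε • fun y ↦ ‖y‖ ^ 2) (closure U) x) : x ∉ U := by
  intro hx
  have contDiffAt_norm_sq : ContDiffAt ℝ 2 (fun y : E ↦ ‖y‖ ^ 2) x :=
    contDiffAt_id.norm_sq ℝ
  have contDiffAt_smul_norm_sq : ContDiffAt ℝ 2 (ε • fun y : E ↦ ‖y‖ ^ 2) x :=
    contDiffAt_norm_sq.const_smul ε
  have laplacian_le : Δ (w + ε • fun y ↦ ‖y‖ ^ 2 : E → ℝ) x ≤ 0 :=
    laplacian_nonpos_of_isLocalMax ((hw x hx).1.add contDiffAt_smul_norm_sq)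
      (hmax.isLocalMax (mem_of_superset (hU.mem_nhds hx) subset_closure))
  have laplacian_eq : Δ (w + ε • fun y ↦ ‖y‖ ^ 2 : E → ℝ) x = ε * (2 * Module.finrank ℝ E) := by
    rw [(hw x hx).1.laplacian_add contDiffAt_smul_norm_sq,
      laplacian_smul ε contDiffAt_norm_sq, laplacian_norm_sq, (hw x hx).2.self_of_nhds,
      Pi.zero_apply, zero_add, smul_eq_mul]
  have finrank_pos : (0 : ℝ) < Module.finrank ℝ E := by exact_mod_cast Module.finrank_pos
  rw [laplacian_eq] at laplacian_le
  exact laplacian_le.not_gt (by positivity)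

lemma le_of_forall_mem_frontier_le (hU : IsOpen U) (hb : Bornology.IsBounded U)
    (hc : ContinuousOn w (closure U)) (hw : HarmonicOnNhd w U) (h_le : ∀ y ∈ frontier U, w y ≤ c)
    (hx : x ∈ closure U) : w x ≤ c := by
  obtain ⟨R, hR⟩ := hb.closure.exists_norm_le
  have le_add (ε : ℝ) (hε : 0 < ε) : w x ≤ c + ε * R ^ 2 := by
    obtain ⟨y, hy, hmax⟩ := hb.isCompact_closure.exists_isMaxOn ⟨x, hx⟩
      (hc.add ((continuous_norm.pow 2).continuousOn.const_smul ε))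
    have y_frontier : y ∈ frontier U :=
      ⟨hy, by rw [hU.interior_eq]; exact isMaxOn_add_norm_sq_notMem hε hU hw hmax⟩
    calc w x ≤ w x + ε * ‖x‖ ^ 2 := le_add_of_nonneg_right (by positivity)
      _ ≤ w y + ε * ‖y‖ ^ 2 := hmax hx
      _ ≤ c + ε * R ^ 2 := by
        gcongr
        exacts [h_le y y_frontier, hR y hy]
  have h_tendsto : Tendsto (fun ε : ℝ ↦ c + ε * R ^ 2) (𝓝[>] 0) (𝓝 c) := by
    have : Continuous fun ε : ℝ ↦ c + ε * R ^ 2 := by fun_prop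
    simpa using (this.tendsto 0).mono_left nhdsWithin_le_nhds
  exact ge_of_tendsto h_tendsto (eventually_mem_nhdsWithin.mono le_add)

lemma le_of_forall_mem_frontier_le_of_tendsto_zero (hU : IsOpen U)
    (hc : ContinuousOn w (closure U)) (hw : HarmonicOnNhd w U)
    (hw₀ : Tendsto w (Bornology.cobounded E) (𝓝 0)) (hc₀ : 0 ≤ c)
    (h_le : ∀ y ∈ frontier U, w y ≤ c) (hx : x ∈ closure U) : w x ≤ c := by
  refine le_of_forall_pos_le_add fun δ hδ ↦ ?_
  obtain ⟨R, hR⟩ : ∃ R, ∀ y, R ≤ ‖y‖ → w y < c + δ := by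
    have h_ev := hw₀.eventually (gt_mem_nhds (by positivity : 0 < c + δ))
    rw [← comap_norm_atTop, eventually_comap] at h_ev
    obtain ⟨R, hR⟩ := eventually_atTop.1 h_ev
    exact ⟨R, fun y hy ↦ hR _ hy y rfl⟩
  rcases le_or_gt R ‖x‖ with hxR | hxR
  · exact (hR x hxR).le
  have x_mem : x ∈ closure (U ∩ Metric.ball 0 R) :=
    Metric.isOpen_ball.closure_inter ⟨hx, mem_ball_zero_iff.2 hxR⟩
  refine le_of_forall_mem_frontier_le (hU.inter Metric.isOpen_ball)
    (Metric.isBounded_ball.subset Set.inter_subset_right)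
    (hc.mono (closure_mono Set.inter_subset_left)) (hw.mono Set.inter_subset_left)
    (fun y hy ↦ ?_) x_mem
  rcases frontier_inter_subset _ _ hy with ⟨hyU, -⟩ | ⟨-, hyR⟩
  · exact (h_le y hyU).trans (by linarith)
  · exact (hR y (mem_sphere_zero_iff_norm.1 (Metric.frontier_ball_subset_sphere hyR)).ge).le

theorem abs_le_of_forall_mem_frontier_abs_le (hU : IsOpen U)
    (hc : ContinuousOn w (closure U)) (hw : HarmonicOnNhd w U)
    (hw₀ : Tendsto w (Bornology.cobounded E) (𝓝 0)) (hc₀ : 0 ≤ c)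
    (h_le : ∀ y ∈ frontier U, |w y| ≤ c) (hx : x ∈ closure U) : |w x| ≤ c := by
  refine abs_le'.2 ⟨?_, ?_⟩
  · exact le_of_forall_mem_frontier_le_of_tendsto_zero hU hc hw hw₀ hc₀
      (fun y hy ↦ (abs_le'.1 (h_le y hy)).1) hx
  · exact le_of_forall_mem_frontier_le_of_tendsto_zero (w := -w) hU hc.neg hw.neg
      (neg_zero (G := ℝ) ▸ hw₀.neg) hc₀ (fun y hy ↦ (abs_le'.1 (h_le y hy)).2) hx

end MaximumPrinciple

section Gradient

open InnerProductSpace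

variable {E : Type*} [NormedAddCommGroup E] [InnerProductSpace ℝ E] [CompleteSpace E]
  {f g : E → ℝ} {f' g' e x : E}

lemma hasGradientAt_mul (hf : HasGradientAt f f' x) (hg : HasGradientAt g g' x) :
    HasGradientAt (f * g) (f x • g' + g x • f') x := by
  rw [hasGradientAt_iff_hasFDerivAt, map_add, map_smul, map_smul]
  exact hf.hasFDerivAt.mul hg.hasFDerivAt

lemma hasGradientAt_comp {φ : ℝ → ℝ} {φ' : ℝ} (hφ : HasDerivAt φ φ' (f x))
    (hf : HasGradientAt f f' x) : HasGradientAt (φ ∘ f) (φ' • f') x := by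
  rw [hasGradientAt_iff_hasFDerivAt, map_smul]
  exact hφ.comp_hasFDerivAt x hf.hasFDerivAt

lemma hasGradientAt_inner : HasGradientAt (fun y ↦ inner ℝ e y) e x :=
  hasGradientAt_iff_hasFDerivAt.2 (innerSL ℝ e).hasFDerivAt

lemma hasGradientAt_norm_sq : HasGradientAt (fun y : E ↦ ‖y‖ ^ 2) ((2 : ℝ) • x) x := by
  rw [hasGradientAt_iff_hasFDerivAt, map_smul, ofNat_smul_eq_nsmul]
  exact (hasStrictFDerivAt_norm_sq x).hasFDerivAt

lemma hasGradientAt_inv_norm (hx : x ≠ 0) :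
    HasGradientAt (fun y : E ↦ ‖y‖⁻¹) (-(‖x‖⁻¹ ^ 3) • x) x := by
  have norm_ne : ‖x‖ ≠ 0 := norm_ne_zero_iff.2 hx
  have hasDerivAt_inv_sqrt : HasDerivAt (fun t ↦ (√t)⁻¹) (-(‖x‖⁻¹ ^ 3) / 2) (‖x‖ ^ 2) := by
    refine ((hasDerivAt_sqrt (pow_ne_zero 2 norm_ne)).inv ?_).congr_deriv ?_ <;>
      rw [sqrt_sq (norm_nonneg x)]
    · exact norm_ne
    · field_simp
  have h_comp := hasGradientAt_comp (f := fun y : E ↦ ‖y‖ ^ 2) hasDerivAt_inv_sqrt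
    hasGradientAt_norm_sq
  rw [smul_smul, div_mul_cancel₀ _ two_ne_zero] at h_comp
  refine h_comp.congr_of_eventuallyEq (.of_forall fun y ↦ ?_)
  simp only [Function.comp_apply, sqrt_sq (norm_nonneg y)]

end Gradient

section SolidZonalHarmonics

open InnerProductSpace Topology Laplacian
open scoped Gradient

variable {E : Type*} [NormedAddCommGroup E] [InnerProductSpace ℝ E] {e x : E}

/-- The cosine of the angle between `x` and the axis `e`; it is `0` when `x = 0`. -/
def axialCos (e x : E) : Set.Icc (-1 : ℝ) 1 :=
  ⟨cos (InnerProductGeometry.angle e x), cos_mem_Icc _⟩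

lemma axialCos_smul {r : ℝ} (hr : 0 < r) : axialCos e (r • x) = axialCos e x :=
  Subtype.ext (congrArg cos (InnerProductGeometry.angle_smul_right_of_pos e x hr))

/-- The solid zonal harmonic of degree `-(l + 1)` with axis `e`, that is, the decaying harmonic
extension `‖x‖ ^ (-l-1) * Y_l⁰(x / ‖x‖)` of a zonal spherical harmonic to the exterior of the unit
ball of a three-dimensional space. The zonal harmonic is normalized by the orthonormality of its
profile in `L²(-1, 1)`. -/
def solidZonal (e : E) (l : ℕ) (x : E) : ℝ := ‖x‖⁻¹ ^ (l + 1) * legendreFn l (axialCos e x)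

lemma solidZonal_eq (he : ‖e‖ = 1) (l : ℕ) : solidZonal e l =
    √((2 * l + 1) / 2) • ((fun x ↦ ‖x‖⁻¹ ^ (l + 1)) *
      ((fun t ↦ (legendreP l).eval t) ∘ fun x ↦ inner ℝ e x * ‖x‖⁻¹)) := by
  funext x
  simp only [solidZonal, axialCos, legendreFn_apply, InnerProductGeometry.cos_angle, he, one_mul,
    Pi.smul_apply, Pi.mul_apply, Function.comp_apply, smul_eq_mul, div_eq_mul_inv]
  ring

lemma abs_solidZonal_le (e : E) (l : ℕ) (x : E) :
    |solidZonal e l x| ≤ ‖x‖⁻¹ ^ (l + 1) * ‖legendreFn l‖ := by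
  rw [solidZonal, abs_mul, abs_of_nonneg (by positivity)]
  gcongr
  exact (legendreFn l).norm_coe_le_norm _

lemma tendsto_solidZonal_cobounded (e : E) (l : ℕ) :
    Tendsto (solidZonal e l) (Bornology.cobounded E) (𝓝 0) := by
  refine squeeze_zero_norm (abs_solidZonal_le e l) ?_
  have h_inv : Tendsto (fun x : E ↦ ‖x‖⁻¹) (Bornology.cobounded E) (𝓝 0) :=
    tendsto_inv_atTop_zero.comp tendsto_norm_cobounded_atTop
  simpa using (h_inv.pow (l + 1)).mul_const ‖legendreFn l‖

lemma contDiffAt_inv_norm {n : WithTop ℕ∞} (hx : x ≠ 0) : ContDiffAt ℝ n (fun y : E ↦ ‖y‖⁻¹) x :=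
  (contDiffAt_norm ℝ hx).inv (norm_ne_zero_iff.2 hx)

lemma contDiff_eval (p : Polynomial ℝ) {n : WithTop ℕ∞} : ContDiff ℝ n fun t ↦ p.eval t := by
  simpa only [Polynomial.coe_aeval_eq_eval] using p.contDiff_aeval (𝕜 := ℝ) n

lemma contDiffAt_inner_mul_inv_norm {n : WithTop ℕ∞} (hx : x ≠ 0) :
    ContDiffAt ℝ n (fun y ↦ inner ℝ e y * ‖y‖⁻¹) x :=
  (innerSL ℝ e).contDiff.contDiffAt.mul (contDiffAt_inv_norm hx)

lemma contDiffAt_solidZonal (he : ‖e‖ = 1) (hx : x ≠ 0) (l : ℕ) :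
    ContDiffAt ℝ 2 (solidZonal e l) x := by
  rw [solidZonal_eq he]
  exact contDiffAt_const.smul (((contDiffAt_inv_norm hx).pow _).mul
    ((contDiff_eval _).contDiffAt.comp x (contDiffAt_inner_mul_inv_norm hx)))

variable [FiniteDimensional ℝ E]

lemma laplacian_inner : Δ (fun y ↦ inner ℝ e y) x = 0 := by
  have fderiv_eq : (fderiv ℝ fun y ↦ inner ℝ e y) = fun _ ↦ innerSL ℝ e :=
    funext fun y ↦ (innerSL ℝ e).hasFDerivAt.fderiv
  simp [laplacian_eq_sum_fderiv_fderiv (stdOrthonormalBasis ℝ E), fderiv_eq]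

lemma laplacian_inv_norm (hx : x ≠ 0) :
    Δ (fun y : E ↦ ‖y‖⁻¹) x = (3 - Module.finrank ℝ E) * ‖x‖⁻¹ ^ 3 := by
  have norm_ne : ‖x‖ ≠ 0 := norm_ne_zero_iff.2 hx
  -- Compare the two ways of computing the Laplacian of `‖y‖⁻¹ * ‖y‖⁻¹ = (‖y‖ ^ 2)⁻¹`.
  have laplacian_mul_self := laplacian_mul (contDiffAt_inv_norm hx) (contDiffAt_inv_norm hx)
  have laplacian_inv : Δ ((·⁻¹) ∘ fun y : E ↦ ‖y‖ ^ 2) x =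
      (8 - 2 * Module.finrank ℝ E) * ‖x‖⁻¹ ^ 4 := by
    have h_deriv : HasDerivAt (deriv (·⁻¹)) (2 * (‖x‖ ^ 2)⁻¹ ^ 3) (‖x‖ ^ 2) := by
      rw [deriv_inv']
      refine ((hasDerivAt_pow 2 _).inv (by positivity)).neg.congr_deriv ?_
      push_cast
      field_simp
    rw [laplacian_comp (f := fun y : E ↦ ‖y‖ ^ 2) (contDiffAt_inv ℝ (by positivity))
      (contDiffAt_id.norm_sq ℝ), hasGradientAt_norm_sq.gradient, laplacian_norm_sq, h_deriv.deriv,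
      deriv_inv, norm_smul, norm_ofNat]
    field_simp
    ring
  have mul_self_eq : (fun y : E ↦ ‖y‖⁻¹) * (fun y ↦ ‖y‖⁻¹) = (·⁻¹) ∘ fun y : E ↦ ‖y‖ ^ 2 := by
    funext y
    simp [sq]
  rw [mul_self_eq, laplacian_inv, (hasGradientAt_inv_norm hx).gradient, real_inner_self_eq_norm_sq,
    norm_smul, norm_neg, norm_pow, norm_inv, norm_norm] at laplacian_mul_self
  field_simp at laplacian_mul_self ⊢
  linarith

lemma laplacian_inv_norm_pow (hE : Module.finrank ℝ E = 3) (hx : x ≠ 0) (l : ℕ) :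
    Δ (fun y : E ↦ ‖y‖⁻¹ ^ (l + 1)) x = l * (l + 1) * ‖x‖⁻¹ ^ (l + 3) := by
  have h_comp := laplacian_comp (φ := (· ^ (l + 1))) (contDiffAt_id.pow _)
    (contDiffAt_inv_norm hx)
  have h_deriv : deriv (deriv fun t : ℝ ↦ t ^ (l + 1)) ‖x‖⁻¹ = (l + 1) * (l * ‖x‖⁻¹ ^ (l - 1)) := by
    have deriv_pow_succ : (deriv fun t : ℝ ↦ t ^ (l + 1)) = fun t : ℝ ↦ ((l : ℝ) + 1) * t ^ l :=
      funext fun t ↦ by simp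
    rw [deriv_pow_succ, deriv_const_mul_field, deriv_pow_field]
  have norm_gradient : ‖x‖⁻¹ ^ 3 * ‖x‖ = ‖x‖⁻¹ ^ 2 := by
    rw [pow_succ, inv_mul_cancel_right₀ (norm_ne_zero_iff.2 hx)]
  rw [laplacian_inv_norm hx, hE, (hasGradientAt_inv_norm hx).gradient, h_deriv, norm_smul, norm_neg,
    norm_pow, norm_inv, norm_norm, norm_gradient] at h_comp
  refine h_comp.trans ?_
  rcases l with _ | l
  · simp
  · push_cast [Nat.add_sub_cancel]
    ring

lemma hasGradientAt_inner_mul_inv_norm (hx : x ≠ 0) :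
    HasGradientAt (fun y ↦ inner ℝ e y * ‖y‖⁻¹)
      (‖x‖⁻¹ • e - (inner ℝ e x * ‖x‖⁻¹ ^ 3) • x) x := by
  have h_mul := hasGradientAt_mul (hasGradientAt_inner (e := e)) (hasGradientAt_inv_norm hx)
  rwa [smul_smul, mul_neg, neg_smul, neg_add_eq_sub] at h_mul

lemma inner_gradient_inner_mul_inv_norm (hx : x ≠ 0) :
    inner ℝ x (∇ (fun y ↦ inner ℝ e y * ‖y‖⁻¹) x) = 0 := by
  have := norm_ne_zero_iff.2 hx
  rw [(hasGradientAt_inner_mul_inv_norm hx).gradient, inner_sub_right, inner_smul_right,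
    inner_smul_right, real_inner_self_eq_norm_sq, real_inner_comm]
  field_simp
  ring

lemma norm_sq_gradient_inner_mul_inv_norm (he : ‖e‖ = 1) (hx : x ≠ 0) :
    ‖∇ (fun y ↦ inner ℝ e y * ‖y‖⁻¹) x‖ ^ 2 = ‖x‖⁻¹ ^ 2 * (1 - (inner ℝ e x * ‖x‖⁻¹) ^ 2) := by
  have := norm_ne_zero_iff.2 hx
  rw [(hasGradientAt_inner_mul_inv_norm hx).gradient, norm_sub_sq_real, inner_smul_left,
    inner_smul_right, norm_smul, norm_smul, mul_pow, mul_pow, he, norm_eq_abs, norm_eq_abs,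
    sq_abs, sq_abs]
  simp only [conj_trivial]
  field_simp
  ring

lemma laplacian_inner_mul_inv_norm (hE : Module.finrank ℝ E = 3) (hx : x ≠ 0) :
    Δ (fun y ↦ inner ℝ e y * ‖y‖⁻¹) x = -2 * ‖x‖⁻¹ ^ 2 * (inner ℝ e x * ‖x‖⁻¹) := by
  have h_mul := laplacian_mul (f := fun y ↦ inner ℝ e y) (innerSL ℝ e).contDiff.contDiffAt
    (contDiffAt_inv_norm hx)
  rw [laplacian_inner, laplacian_inv_norm hx, hE, hasGradientAt_inner.gradient,
    (hasGradientAt_inv_norm hx).gradient, inner_smul_right] at h_mul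
  refine h_mul.trans ?_
  push_cast
  ring

lemma inner_gradient_inv_norm_pow_gradient_comp {φ : ℝ → ℝ} (hx : x ≠ 0) (l : ℕ)
    (hφ : DifferentiableAt ℝ φ (inner ℝ e x * ‖x‖⁻¹)) :
    inner ℝ (∇ (fun y : E ↦ ‖y‖⁻¹ ^ (l + 1)) x) (∇ (φ ∘ fun y ↦ inner ℝ e y * ‖y‖⁻¹) x) = 0 := by
  have hasGradientAt_radial : HasGradientAt (fun y : E ↦ ‖y‖⁻¹ ^ (l + 1)) _ x :=
    hasGradientAt_comp (hasDerivAt_pow (l + 1) _) (hasGradientAt_inv_norm hx)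
  have hasGradientAt_angular : HasGradientAt (φ ∘ fun y ↦ inner ℝ e y * ‖y‖⁻¹) _ x :=
    hasGradientAt_comp hφ.hasDerivAt
      (hasGradientAt_inner_mul_inv_norm hx).differentiableAt.hasGradientAt
  rw [hasGradientAt_radial.gradient, hasGradientAt_angular.gradient, smul_smul,
    inner_smul_left, inner_smul_right, inner_gradient_inner_mul_inv_norm hx, mul_zero, mul_zero]

lemma laplacian_legendreP_comp (hE : Module.finrank ℝ E = 3) (he : ‖e‖ = 1) (hx : x ≠ 0) (l : ℕ) :
    Δ ((fun t ↦ (legendreP l).eval t) ∘ fun y ↦ inner ℝ e y * ‖y‖⁻¹) x =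
      -(l * (l + 1) * ‖x‖⁻¹ ^ 2 * (legendreP l).eval (inner ℝ e x * ‖x‖⁻¹)) := by
  have deriv_eval (p : Polynomial ℝ) : (deriv fun t ↦ p.eval t) = fun t ↦ p.derivative.eval t :=
    funext fun t ↦ p.deriv
  rw [laplacian_comp (contDiff_eval _).contDiffAt (contDiffAt_inner_mul_inv_norm hx),
    norm_sq_gradient_inner_mul_inv_norm he hx, laplacian_inner_mul_inv_norm hE hx, deriv_eval,
    deriv_eval]
  linear_combination ‖x‖⁻¹ ^ 2 * eval_legendreP_ode l (inner ℝ e x * ‖x‖⁻¹)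

lemma laplacian_solidZonal (hE : Module.finrank ℝ E = 3) (he : ‖e‖ = 1) (hx : x ≠ 0) (l : ℕ) :
    Δ (solidZonal e l) x = 0 := by
  have contDiffAt_radial : ContDiffAt ℝ 2 (fun y : E ↦ ‖y‖⁻¹ ^ (l + 1)) x :=
    (contDiffAt_inv_norm hx).pow _
  have contDiffAt_angular :
      ContDiffAt ℝ 2 ((fun t ↦ (legendreP l).eval t) ∘ fun y ↦ inner ℝ e y * ‖y‖⁻¹) x :=
    (contDiff_eval _).contDiffAt.comp x (contDiffAt_inner_mul_inv_norm hx)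
  have contDiffAt_mul : ContDiffAt ℝ 2 ((fun y : E ↦ ‖y‖⁻¹ ^ (l + 1)) *
      ((fun t ↦ (legendreP l).eval t) ∘ fun y ↦ inner ℝ e y * ‖y‖⁻¹)) x :=
    contDiffAt_radial.mul contDiffAt_angular
  rw [solidZonal_eq he, laplacian_smul _ contDiffAt_mul,
    laplacian_mul contDiffAt_radial contDiffAt_angular, laplacian_legendreP_comp hE he hx,
    inner_gradient_inv_norm_pow_gradient_comp hx l (legendreP l).differentiable.differentiableAt,
    laplacian_inv_norm_pow hE hx, Function.comp_apply, smul_eq_mul]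
  ring

lemma harmonicAt_solidZonal (hE : Module.finrank ℝ E = 3) (he : ‖e‖ = 1) (hx : x ≠ 0) (l : ℕ) :
    HarmonicAt (solidZonal e l) x :=
  ⟨contDiffAt_solidZonal he hx l,
    (isOpen_ne.eventually_mem hx).mono fun _ hy ↦ laplacian_solidZonal hE he hy l⟩

end SolidZonalHarmonics

section ExteriorExpansion

open InnerProductSpace Topology

lemma harmonicOnNhd_sub_sum {E : Type*} [NormedAddCommGroup E] [InnerProductSpace ℝ E]
    [FiniteDimensional ℝ E] {U : Set E} {u : E → ℝ} {ι : Type*} {v : ι → E → ℝ} (c : ι → ℝ)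
    (hu : HarmonicOnNhd u U) (hv : ∀ i, HarmonicOnNhd (v i) U) (s : Finset ι) :
    HarmonicOnNhd (fun y ↦ u y - ∑ i ∈ s, c i * v i y) U := by
  classical
  induction s using Finset.induction_on with
  | empty => simpa using hu
  | insert i s hi ih =>
    simp_rw [Finset.sum_insert hi, add_comm (c i * _), ← sub_sub]
    exact ih.sub ((hv i).const_smul (c := c i))

variable {E : Type*} [NormedAddCommGroup E] [InnerProductSpace ℝ E] [FiniteDimensional ℝ E]
  {e x : E} {u : E → ℝ} {f : C(Set.Icc (-1 : ℝ) 1, ℝ)} {c : ℕ → ℝ}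

theorem abs_sub_sum_solidZonal_le (hE : Module.finrank ℝ E = 3) (he : ‖e‖ = 1)
    (hu : HarmonicOnNhd u (Metric.closedBall 0 1)ᶜ) (huc : ContinuousOn u (Metric.ball 0 1)ᶜ)
    (hu₀ : Tendsto u (Bornology.cobounded E) (𝓝 0)) (h_bd : ∀ y, ‖y‖ = 1 → u y = f (axialCos e y))
    (hx : 1 ≤ ‖x‖) (s : Finset ℕ) :
    |u x - ∑ l ∈ s, c l * solidZonal e l x| ≤ ‖f - ∑ l ∈ s, c l • legendreFn l‖ := by
  have : Nontrivial E := ⟨e, 0, norm_ne_zero_iff.1 (he ▸ one_ne_zero)⟩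
  have h_closure : closure (Metric.closedBall (0 : E) 1)ᶜ = (Metric.ball 0 1)ᶜ := by
    rw [closure_compl, interior_closedBall _ one_ne_zero]
  have h_ne {y : E} (hy : y ∈ (Metric.ball (0 : E) 1)ᶜ) : y ≠ 0 := by
    rintro rfl
    exact hy (Metric.mem_ball_self one_pos)
  refine abs_le_of_forall_mem_frontier_abs_le (U := (Metric.closedBall 0 1)ᶜ)
    (w := fun y ↦ u y - ∑ l ∈ s, c l * solidZonal e l y)
    Metric.isClosed_closedBall.isOpen_compl ?_
    (harmonicOnNhd_sub_sum c hu (fun l y hy ↦ harmonicAt_solidZonal hE he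
      (h_ne (Set.compl_subset_compl.2 Metric.ball_subset_closedBall hy)) l) s) ?_
    (norm_nonneg _) (fun y hy ↦ ?_) (by rw [h_closure]; simpa using hx)
  · rw [h_closure]
    refine huc.sub (continuousOn_finsetSum _ fun l _ y hy ↦ ?_)
    exact ((contDiffAt_solidZonal he (h_ne hy) l).continuousAt.const_mul (c l)).continuousWithinAt
  · have h_tendsto := tendsto_finsetSum s
      fun l _ ↦ (tendsto_solidZonal_cobounded e l).const_mul (c l)
    simpa using hu₀.sub h_tendsto
  · rw [frontier_compl, frontier_closedBall _ one_ne_zero, mem_sphere_zero_iff_norm] at hy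
    rw [h_bd y hy]
    convert (f - ∑ l ∈ s, c l • legendreFn l).norm_coe_le_norm (axialCos e y) using 1
    simp [solidZonal, hy]

-- The maximum principle turns uniform convergence on the unit sphere into convergence outside.
theorem hasSum_solidZonal (hE : Module.finrank ℝ E = 3) (he : ‖e‖ = 1)
    (hu : HarmonicOnNhd u (Metric.closedBall 0 1)ᶜ) (huc : ContinuousOn u (Metric.ball 0 1)ᶜ)
    (hu₀ : Tendsto u (Bornology.cobounded E) (𝓝 0)) (h_bd : ∀ y, ‖y‖ = 1 → u y = f (axialCos e y))
    (hf : HasSum (fun l ↦ c l • legendreFn l) f) (hx : 1 ≤ ‖x‖) :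
    HasSum (fun l ↦ c l * solidZonal e l x) (u x) := by
  have norm_tendsto : Tendsto (fun s ↦ ‖f - ∑ l ∈ s, c l • legendreFn l‖) atTop (𝓝 0) := by
    simpa only [sub_self, norm_zero, SummationFilter.unconditional_filter] using
      (Tendsto.sub (tendsto_const_nhds (x := f)) hf).norm
  refine (tendsto_iff_norm_sub_tendsto_zero.2 <| squeeze_zero (fun _ ↦ norm_nonneg _)
    (fun s ↦ ?_) norm_tendsto)
  rw [norm_sub_rev]
  exact abs_sub_sum_solidZonal_le hE he hu huc hu₀ h_bd hx s

end ExteriorExpansion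

section ExteriorOfUnitSphere

open InnerProductSpace Topology Laplacian

variable {u : EuclideanSpace ℝ (Fin 3) → ℝ}

lemma extDomain_eq : extDomain = (Metric.closedBall 0 1)ᶜ := by
  ext x
  simp [extDomain]

lemma closedExt_eq : closedExt = (Metric.ball 0 1)ᶜ := by
  ext x
  simp [closedExt]

lemma lap_eq_laplacian {x : EuclideanSpace ℝ (Fin 3)} (hu : ContDiffAt ℝ 2 u x) :
    lap u x = Δ u x := by
  have h_diff : DifferentiableAt ℝ (fderiv ℝ u) x :=
    (hu.fderiv_right (m := 1) (by norm_num)).differentiableAt one_ne_zero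
  rw [laplacian_eq_sum_fderiv_fderiv (EuclideanSpace.basisFun (Fin 3) ℝ), lap]
  simp only [EuclideanSpace.basisFun_apply]
  refine Finset.sum_congr rfl fun i _ ↦ ?_
  rw [fderiv_clm_apply h_diff (differentiableAt_const _)]
  simp

lemma harmonicOnNhd_extDomain (hu : ContDiffOn ℝ 2 u extDomain)
    (h_lap : ∀ x ∈ extDomain, lap u x = 0) : HarmonicOnNhd u (Metric.closedBall 0 1)ᶜ := by
  rw [← extDomain_eq]
  have isOpen_extDomain : IsOpen extDomain := extDomain_eq ▸ Metric.isClosed_closedBall.isOpen_compl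
  have contDiffAt_u {x} (hx : x ∈ extDomain) : ContDiffAt ℝ 2 u x :=
    hu.contDiffAt (isOpen_extDomain.mem_nhds hx)
  refine fun x hx ↦ ⟨contDiffAt_u hx, ?_⟩
  filter_upwards [isOpen_extDomain.mem_nhds hx] with y hy
  rw [← lap_eq_laplacian (contDiffAt_u hy), h_lap y hy, Pi.zero_apply]

end ExteriorOfUnitSphere

section SphericalCoordinates

/-- The unit vector on the polar axis `θ = π / 2`. -/
def northPole : EuclideanSpace ℝ (Fin 3) := EuclideanSpace.single 2 1

variable (θ φ : ℝ) {y : EuclideanSpace ℝ (Fin 3)}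

lemma norm_northPole : ‖northPole‖ = 1 := by
  simp [northPole]

lemma norm_sphCoord : ‖sphCoord θ φ‖ = 1 := by
  rw [EuclideanSpace.norm_eq, sqrt_eq_one, Fin.sum_univ_three]
  simp only [sphCoord, norm_eq_abs, sq_abs, WithLp.equiv_symm_apply, Matrix.cons_val_zero,
    Matrix.cons_val_one, Matrix.cons_val]
  linear_combination cos θ ^ 2 * sin_sq_add_cos_sq φ + sin_sq_add_cos_sq θ

lemma coe_axialCos_northPole (hy : ‖y‖ = 1) : (axialCos northPole y : ℝ) = y 2 := by
  simp [axialCos, InnerProductGeometry.cos_angle, hy, northPole, EuclideanSpace.inner_single_left]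

lemma axialCos_sphCoord : axialCos northPole (sphCoord θ φ) = sinIcc θ :=
  Subtype.ext (coe_axialCos_northPole (norm_sphCoord θ φ))

lemma continuous_sphCoord_left : Continuous fun θ ↦ sphCoord θ φ := by
  refine (PiLp.continuous_toLp 2 _).comp (continuous_pi fun i ↦ ?_)
  match i with
  | 0 => exact continuous_cos.mul continuous_const
  | 1 => exact continuous_cos.mul continuous_const
  | 2 => exact continuous_sin

lemma exists_eq_sphCoord_arcsin (hy : ‖y‖ = 1) :
    ∃ φ, y = sphCoord (arcsin (axialCos northPole y)) φ := by
  have norm_sq_eq : y 0 ^ 2 + y 1 ^ 2 + y 2 ^ 2 = 1 := by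
    rw [EuclideanSpace.norm_eq, sqrt_eq_one, Fin.sum_univ_three] at hy
    simpa using hy
  have norm_equatorial : ‖(⟨y 0, y 1⟩ : ℂ)‖ = cos (arcsin (axialCos northPole y)) := by
    rw [cos_arcsin, coe_axialCos_northPole hy, Complex.norm_def, Complex.normSq_mk, ← norm_sq_eq]
    ring_nf
  have sin_latitude : sin (arcsin (axialCos northPole y)) = y 2 := by
    rw [sin_arcsin (axialCos northPole y).2.1 (axialCos northPole y).2.2, coe_axialCos_northPole hy]
  refine ⟨Complex.arg ⟨y 0, y 1⟩, ?_⟩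
  ext i
  fin_cases i
  · simp [sphCoord, ← norm_equatorial, Complex.norm_mul_cos_arg]
  · simp [sphCoord, ← norm_equatorial, Complex.norm_mul_sin_arg]
  · simp [sphCoord, sin_latitude]

end SphericalCoordinates

section AxialTrace

open InnerProductSpace Topology

variable {u : EuclideanSpace ℝ (Fin 3) → ℝ}

lemma exists_traceR_eq_zonal (huc : ContinuousOn u closedExt) (hu : Axial (traceR u)) :
    ∃ f : C(Set.Icc (-1 : ℝ) 1, ℝ),
      traceR u = zonal f ∧ ∀ y, ‖y‖ = 1 → u y = f (axialCos northPole y) := by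
  have continuous_meridian : Continuous fun θ ↦ u (sphCoord θ 0) :=
    huc.comp_continuous (continuous_sphCoord_left 0) fun θ ↦ (norm_sphCoord θ 0).ge
  let f : C(Set.Icc (-1 : ℝ) 1, ℝ) :=
    ⟨fun t ↦ u (sphCoord (arcsin t) 0),
      continuous_meridian.comp (continuous_arcsin.comp continuous_subtype_val)⟩
  have u_eq (y : EuclideanSpace ℝ (Fin 3)) (hy : ‖y‖ = 1) : u y = f (axialCos northPole y) := by
    obtain ⟨φ, hφ⟩ := exists_eq_sphCoord_arcsin hy
    have h_axial := Complex.ofReal_inj.1 (hu (arcsin (axialCos northPole y)) φ 0)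
    rwa [← hφ] at h_axial
  refine ⟨f, funext₂ fun θ φ ↦ ?_, u_eq⟩
  rw [traceR, u_eq _ (norm_sphCoord θ φ), axialCos_sphCoord, zonal]

end AxialTrace

section RadialDerivative

open InnerProductSpace Topology

lemma abs_inv_pow_sub_one_le {r : ℝ} (hr : 1 ≤ r) (n : ℕ) : |r⁻¹ ^ n - 1| ≤ n * (r - 1) := by
  have r_pos : 0 < r := by linarith
  have inv_le_one : r⁻¹ ≤ 1 := inv_le_one_of_one_le₀ hr
  have bernoulli : 1 + n * (r⁻¹ - 1) ≤ (1 + (r⁻¹ - 1)) ^ n :=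
    one_add_mul_le_pow (by linarith [inv_pos.2 r_pos]) n
  have one_sub_inv_le : 1 - r⁻¹ ≤ r - 1 :=
    (one_sub_inv_le_log_of_pos r_pos).trans (log_le_sub_one_of_pos r_pos)
  rw [abs_of_nonpos (sub_nonpos.2 (pow_le_one₀ (by positivity) inv_le_one)), neg_sub]
  calc 1 - r⁻¹ ^ n ≤ n * (1 - r⁻¹) := by linarith [add_sub_cancel (1 : ℝ) r⁻¹ ▸ bernoulli]
    _ ≤ n * (r - 1) := by gcongr

lemma hasDerivWithinAt_tsum_of_norm_sub_le {ι E : Type*} [NormedAddCommGroup E] [NormedSpace ℝ E]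
    [CompleteSpace E] {F : ι → ℝ → E} {F' : ι → E} {K : ι → ℝ} {S : Set ℝ} {a : ℝ}
    (hK : Summable K) (h_summable : ∀ r ∈ S, Summable fun i ↦ F i r) (ha : a ∈ S)
    (h_le : ∀ i, ∀ r ∈ S, ‖F i r - F i a‖ ≤ K i * |r - a|)
    (h_deriv : ∀ i, HasDerivWithinAt (F i) (F' i) S a) :
    HasDerivWithinAt (fun r ↦ ∑' i, F i r) (∑' i, F' i) S a := by
  simp only [hasDerivWithinAt_iff_tendsto_slope] at h_deriv ⊢
  have mem_S : ∀ᶠ r in 𝓝[S \ {a}] a, r ∈ S \ {a} := eventually_mem_nhdsWithin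
  have slope_tsum : ∀ᶠ r in 𝓝[S \ {a}] a,
      ∑' i, slope (F i) a r = slope (fun r ↦ ∑' i, F i r) a r := by
    filter_upwards [mem_S] with r hr
    simp only [slope_def_module]
    rw [tsum_const_smul'', (h_summable r hr.1).tsum_sub (h_summable a ha)]
  refine (tendsto_tsum_of_dominated_convergence hK h_deriv ?_).congr' slope_tsum
  filter_upwards [mem_S] with r hr i
  rw [slope_def_module, norm_smul, norm_inv, norm_eq_abs,
    inv_mul_le_iff₀ (abs_pos.2 (sub_ne_zero.2 hr.2)), mul_comm]
  exact h_le i r hr.1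

lemma hasDerivWithinAt_tsum_mul_inv_pow {b : ℕ → ℝ}
    (hb : Summable fun l : ℕ ↦ (l + 1 : ℝ) * |b l|) :
    HasDerivWithinAt (fun r : ℝ ↦ ∑' l, b l * r⁻¹ ^ (l + 1)) (∑' l : ℕ, b l * -(l + 1 : ℝ))
      (Set.Ici 1) 1 := by
  refine hasDerivWithinAt_tsum_of_norm_sub_le hb (fun r hr ↦ ?_) Set.self_mem_Ici
    (fun l r hr ↦ ?_) fun l ↦ ?_
  · have r_pos : 0 < r := one_pos.trans_le hr
    have inv_pow_le (l : ℕ) : r⁻¹ ^ (l + 1) ≤ l + 1 :=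
      (pow_le_one₀ (by positivity) (inv_le_one_of_one_le₀ hr)).trans (by simp)
    refine hb.of_norm_bounded fun l ↦ ?_
    rw [norm_mul, norm_eq_abs, norm_of_nonneg (by positivity), mul_comm]
    exact mul_le_mul_of_nonneg_right (inv_pow_le l) (abs_nonneg _)
  · rw [inv_one, one_pow, mul_one, ← mul_sub_one, norm_mul, norm_eq_abs, norm_eq_abs,
      abs_of_nonneg (a := r - 1) (sub_nonneg.2 hr), mul_right_comm, mul_comm]
    gcongr
    exact_mod_cast abs_inv_pow_sub_one_le hr (l + 1)
  · have h_pow := ((hasDerivAt_inv one_ne_zero).pow (l + 1)).const_mul (b l)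
    simpa using h_pow.hasDerivWithinAt

variable {f : C(Set.Icc (-1 : ℝ) 1, ℝ)} {s : ℝ}

/-- The profile of `-u_r` on the unit sphere when `u` is the decaying harmonic function outside the
unit ball whose boundary trace has profile `f`: the (exterior) Dirichlet-to-Neumann operator on
zonal functions, which multiplies the `l`-th Fourier–Legendre coefficient by `l + 1`. It is only
meaningful when the series converges. -/
def dirichletToNeumann (f : C(Set.Icc (-1 : ℝ) 1, ℝ)) : C(Set.Icc (-1 : ℝ) 1, ℝ) :=
  ∑' l : ℕ, ((l + 1 : ℝ) * legendreBasis.coeff f l) • legendreFn l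

lemma rpow_two_mul_mul_sq {x : ℝ} (hx : 0 < x) (s a : ℝ) :
    x ^ (2 * s) * (x * a) ^ 2 = x ^ (2 * (s + 1)) * a ^ 2 := by
  rw [mul_add, rpow_add hx, mul_one, rpow_two]
  ring

lemma summable_norm_dirichletToNeumann (hs : 1 < s) (hf : legendreBasis.MemSobolev (s + 1) f) :
    Summable fun l : ℕ ↦ ‖((l + 1 : ℝ) * legendreBasis.coeff f l) • legendreFn l‖ := by
  refine legendreBasis.summable_norm_smul (legendreBasis_embeds hs) ?_
  simp only [rpow_two_mul_mul_sq (Nat.cast_add_one_pos _)]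
  exact hf

lemma coeff_dirichletToNeumann (hs : 1 < s) (hf : legendreBasis.MemSobolev (s + 1) f) (l : ℕ) :
    legendreBasis.coeff (dirichletToNeumann f) l = (l + 1) * legendreBasis.coeff f l :=
  congrFun (legendreBasis.coeff_tsum_smul (summable_norm_dirichletToNeumann hs hf)) l

lemma memSobolev_dirichletToNeumann (hs : 1 < s) (hf : legendreBasis.MemSobolev (s + 1) f) :
    legendreBasis.MemSobolev s (dirichletToNeumann f) := by
  simpa only [GradedHilbertBasis.MemSobolev, coeff_dirichletToNeumann hs hf,
    rpow_two_mul_mul_sq (Nat.cast_add_one_pos _)] using hf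

lemma sobolevSq_dirichletToNeumann (hs : 1 < s) (hf : legendreBasis.MemSobolev (s + 1) f) :
    legendreBasis.sobolevSq s (dirichletToNeumann f) = legendreBasis.sobolevSq (s + 1) f := by
  simp only [GradedHilbertBasis.sobolevSq, coeff_dirichletToNeumann hs hf,
    rpow_two_mul_mul_sq (Nat.cast_add_one_pos _)]

theorem hasDerivWithinAt_radial {E : Type*} [NormedAddCommGroup E] [InnerProductSpace ℝ E]
    [FiniteDimensional ℝ E] {e x : E} {u : E → ℝ} (hE : Module.finrank ℝ E = 3) (he : ‖e‖ = 1)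
    (hu : HarmonicOnNhd u (Metric.closedBall 0 1)ᶜ) (huc : ContinuousOn u (Metric.ball 0 1)ᶜ)
    (hu₀ : Tendsto u (Bornology.cobounded E) (𝓝 0)) (h_bd : ∀ y, ‖y‖ = 1 → u y = f (axialCos e y))
    (hs : 1 < s) (hf : legendreBasis.MemSobolev (s + 1) f) (hx : ‖x‖ = 1) :
    HasDerivWithinAt (fun r : ℝ ↦ u (r • x)) (-dirichletToNeumann f (axialCos e x))
      (Set.Ici 1) 1 := by
  set b : ℕ → ℝ := fun l ↦ legendreBasis.coeff f l * legendreFn l (axialCos e x)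
  have h_summable := summable_norm_dirichletToNeumann hs hf
  have u_eq (r : ℝ) (hr : r ∈ Set.Ici 1) : u (r • x) = ∑' l, b l * r⁻¹ ^ (l + 1) := by
    have r_pos : 0 < r := one_pos.trans_le hr
    have norm_smul_x : ‖r • x‖ = r := by rw [norm_smul, hx, mul_one, norm_of_nonneg r_pos.le]
    rw [← (hasSum_solidZonal hE he hu huc hu₀ h_bd (legendreBasis.hasSum_coeff_smul
      (legendreBasis_embeds (by linarith)) hf) (norm_smul_x.symm ▸ hr)).tsum_eq]
    refine tsum_congr fun l ↦ ?_
    rw [solidZonal, norm_smul_x, axialCos_smul r_pos, mul_comm (r⁻¹ ^ _), mul_assoc]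
  have b_summable : Summable fun l : ℕ ↦ (l + 1 : ℝ) * |b l| := by
    refine h_summable.of_nonneg_of_le (fun l ↦ by positivity) fun l ↦ ?_
    rw [norm_smul, norm_mul, norm_of_nonneg (by positivity), abs_mul, mul_assoc]
    gcongr
    · exact le_rfl
    · exact (legendreFn l).norm_coe_le_norm _
  have tsum_eq : ∑' l : ℕ, b l * -(l + 1 : ℝ) = -dirichletToNeumann f (axialCos e x) := by
    rw [dirichletToNeumann, ← ContinuousMap.tsum_apply h_summable.of_norm, ← tsum_neg]
    refine tsum_congr fun l ↦ ?_
    simp only [b, ContinuousMap.smul_apply, smul_eq_mul]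
    ring
  exact tsum_eq ▸ (hasDerivWithinAt_tsum_mul_inv_pow b_summable).congr_of_mem u_eq Set.self_mem_Ici

end RadialDerivative

section ProductEstimate

open Topology

theorem exists_profile_radialDeriv {u : EuclideanSpace ℝ (Fin 3) → ℝ} {s : ℝ} (hs : 1 < s)
    (hu : ContDiffOn ℝ 2 u extDomain) (h_lap : ∀ x ∈ extDomain, lap u x = 0)
    (huc : ContinuousOn u closedExt) (hu₀ : Tendsto u (Bornology.cobounded _) (𝓝 0))
    (h_trace : MemHs (s + 1) (traceR u)) (h_axial : Axial (traceR u)) :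
    ∃ g : C(Set.Icc (-1 : ℝ) 1, ℝ), legendreBasis.MemSobolev s g ∧
      (∀ θ φ, radialDeriv u θ φ = -g (sinIcc θ)) ∧
      HsNorm (s + 1) (traceR u) = √(2 * π * legendreBasis.sobolevSq s g) := by
  obtain ⟨f, trace_eq, h_bd⟩ := exists_traceR_eq_zonal huc h_axial
  have hf : legendreBasis.MemSobolev (s + 1) f := memHs_zonal_iff.1 (trace_eq ▸ h_trace)
  refine ⟨dirichletToNeumann f, memSobolev_dirichletToNeumann hs hf, fun θ φ ↦ ?_, ?_⟩
  · have h_deriv := hasDerivWithinAt_radial finrank_euclideanSpace_fin norm_northPole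
      (harmonicOnNhd_extDomain hu h_lap) (closedExt_eq ▸ huc) hu₀ h_bd hs hf (norm_sphCoord θ φ)
    rw [axialCos_sphCoord] at h_deriv
    exact h_deriv.derivWithin (uniqueDiffOn_Ici 1 1 Set.self_mem_Ici)
  · rw [trace_eq, HsNorm_zonal hf, sobolevSq_dirichletToNeumann hs hf]

theorem HsNorm_zonal_mul_le {s : ℝ} (hs : 1 < s) {f g : C(Set.Icc (-1 : ℝ) 1, ℝ)}
    (hf : legendreBasis.MemSobolev s f) (hg : legendreBasis.MemSobolev s g) :
    HsNorm s (zonal (f * g)) ≤ √(2 ^ (2 * s) * (4 * legendreBasis.embeddingConst s) / (2 * π)) *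
      √(2 * π * legendreBasis.sobolevSq s f) * √(2 * π * legendreBasis.sobolevSq s g) := by
  have hs₀ : 0 < s := by linarith
  have hs' := legendreBasis_embeds hs
  have := (legendreBasis.embeddingConst_pos hs').le
  have := legendreBasis.sobolevSq_nonneg s f
  rw [HsNorm_zonal (hf.mul hg hs₀ hs'), ← sqrt_mul (by positivity), ← sqrt_mul (by positivity)]
  refine sqrt_le_sqrt ?_
  calc 2 * π * legendreBasis.sobolevSq s (f * g)
      ≤ 2 * π * (2 ^ (2 * s) * (4 * legendreBasis.embeddingConst s) *
          legendreBasis.sobolevSq s f * legendreBasis.sobolevSq s g) := by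
        gcongr
        exact legendreBasis.sobolevSq_mul_le hs₀ hs' hf hg
    _ = _ := by field_simp

end ProductEstimate

/-- Lemma 2.6: if `u, v` are harmonic in the exterior of the unit
sphere, continuous up to the sphere, vanish at infinity, and have traces in
`H^{s+1}_ax(𝕊)` with `s > 1`, then `u_r v_r ∈ H^s_ax(𝕊)` with
`‖u_r v_r‖_{H^s} ≤ C ‖u‖_{H^{s+1}} ‖v‖_{H^{s+1}}`. -/
theorem radial_derivative_product_estimate (s : ℝ) (hs : 1 < s) :
    ∃ C > 0, ∀ u v : EuclideanSpace ℝ (Fin 3) → ℝ,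
      ContDiffOn ℝ 2 u extDomain → (∀ x ∈ extDomain, lap u x = 0) →
      ContinuousOn u closedExt → Filter.Tendsto u (Bornology.cobounded _) (nhds 0) →
      MemHs (s + 1) (traceR u) → Axial (traceR u) →
      ContDiffOn ℝ 2 v extDomain → (∀ x ∈ extDomain, lap v x = 0) →
      ContinuousOn v closedExt → Filter.Tendsto v (Bornology.cobounded _) (nhds 0) →
      MemHs (s + 1) (traceR v) → Axial (traceR v) →
      MemHs s (fun θ φ => ((radialDeriv u θ φ * radialDeriv v θ φ : ℝ) : ℂ)) ∧
      Axial (fun θ φ => ((radialDeriv u θ φ * radialDeriv v θ φ : ℝ) : ℂ)) ∧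
      HsNorm s (fun θ φ => ((radialDeriv u θ φ * radialDeriv v θ φ : ℝ) : ℂ)) ≤
        C * HsNorm (s + 1) (traceR u) * HsNorm (s + 1) (traceR v) := by
  have embeddingConst_pos := legendreBasis.embeddingConst_pos (legendreBasis_embeds hs)
  refine ⟨√(2 ^ (2 * s) * (4 * legendreBasis.embeddingConst s) / (2 * π)), by positivity, ?_⟩
  intro u v hu hu_lap huc hu₀ hu_trace hu_axial hv hv_lap hvc hv₀ hv_trace hv_axial
  obtain ⟨f, hf, u_r_eq, norm_u⟩ :=
    exists_profile_radialDeriv hs hu hu_lap huc hu₀ hu_trace hu_axial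
  obtain ⟨g, hg, v_r_eq, norm_v⟩ :=
    exists_profile_radialDeriv hs hv hv_lap hvc hv₀ hv_trace hv_axial
  have product_eq : (fun θ φ ↦ ((radialDeriv u θ φ * radialDeriv v θ φ : ℝ) : ℂ)) =
      zonal (f * g) := by
    funext θ φ
    rw [u_r_eq, v_r_eq, neg_mul_neg, zonal, ContinuousMap.mul_apply]
  rw [product_eq, norm_u, norm_v]
  exact ⟨memHs_zonal_iff.2 (hf.mul hg (by linarith) (legendreBasis_embeds hs)),
    fun _ _ _ ↦ rfl, HsNorm_zonal_mul_le hs hf hg⟩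

end
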